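/- arXiv:1007.3467 — 7 statements merged into one kernel-verified Lean document; each statement's English description precedes it below -/
import Mathlib

section
/- Let n ≥ 1 and let σ be a permutation of {1,…,n} whose bandwidth w = max_i |σ(i) − i| satisfies w > 0. Then σ can be written as a product of at most 2w − 1 permutations of {1,…,n}, each of bandwidth at most 1. -/
/-- The bandwidth of a permutation `σ` of `{0,…,n-1}`: `max_i |σ(i) - i|`. -/
def bandwidth {n : ℕ} (σ : Equiv.Perm (Fin n)) : ℕ :=
  Finset.univ.sup fun i : Fin n => ((σ i : ℤ) - (i : ℤ)).natAbs

/-- `c` is a cut point of `σ` if `σ` maps the initial segment `{0,…,c}` onto itself. -/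
def IsCutPoint {n : ℕ} (σ : Equiv.Perm (Fin n)) (c : Fin n) : Prop :=
  ∀ j : Fin n, j ≤ c → σ j ≤ c

/-- Indices `i ≤ j` lie in the same section of `σ` if there is no cut point `c`
with `i ≤ c < j`. -/
def SameSection {n : ℕ} (σ : Equiv.Perm (Fin n)) (i j : Fin n) : Prop :=
  i ≤ j ∧ ∀ c : Fin n, i ≤ c → c < j → ¬ IsCutPoint σ c

/-- Unordered version of `SameSection`. -/
def InSameSection {n : ℕ} (σ : Equiv.Perm (Fin n)) (i j : Fin n) : Prop :=
  SameSection σ i j ∨ SameSection σ j i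

/-- `σ` is upper-canonical: for `i < j` with `σ(i) > i` and `σ(j) > j`, `σ(i) < σ(j)`. -/
def UpperCanonical {n : ℕ} (σ : Equiv.Perm (Fin n)) : Prop :=
  ∀ i j : Fin n, i < j → i < σ i → j < σ j → σ i < σ j

/-- `σ` is lower-canonical: for `i < j` with `σ(i) < i` and `σ(j) < j`, `σ(i) < σ(j)`. -/
def LowerCanonical {n : ℕ} (σ : Equiv.Perm (Fin n)) : Prop :=
  ∀ i j : Fin n, i < j → σ i < i → σ j < j → σ i < σ j

/-- `σ` is Strang canonical if it is both upper- and lower-canonical. -/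
def StrangCanonical {n : ℕ} (σ : Equiv.Perm (Fin n)) : Prop :=
  UpperCanonical σ ∧ LowerCanonical σ

/-- `σ` is row-settled: no indices `i < j` in the same section
with `σ(i) < i` (negative row) and `σ(j) > j` (positive row). -/
def RowSettled {n : ℕ} (σ : Equiv.Perm (Fin n)) : Prop :=
  ∀ i j : Fin n, i < j → SameSection σ i j → ¬ (σ i < i ∧ j < σ j)

/-- `σ` is settled if it is row-settled or column-settled
(column-settled means `σ⁻¹` is row-settled). -/
def Settled {n : ℕ} (σ : Equiv.Perm (Fin n)) : Prop :=
  RowSettled σ ∨ RowSettled σ⁻¹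

/-- The reducing permutation of `σ`: the product of the (pairwise disjoint)
transpositions `(i, i+1)` over all `i` with `σ(i) > i` and `σ(i+1) < i+1`. -/
def reducingPerm {n : ℕ} (σ : Equiv.Perm (Fin n)) : Equiv.Perm (Fin n) :=
  ((List.finRange n).filterMap fun i : Fin n =>
    if h : (i : ℕ) + 1 < n then
      let j : Fin n := ⟨(i : ℕ) + 1, h⟩
      if i < σ i ∧ σ j < j then some (Equiv.swap i j) else none
    else none).prod

/-- The reduction of `σ` is `σ` composed with its reducing permutation. -/
def reduction {n : ℕ} (σ : Equiv.Perm (Fin n)) : Equiv.Perm (Fin n) :=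
  σ * reducingPerm σ

/-- A bubblesort step for `σ`: a nonidentity permutation `t` that is a product of
pairwise disjoint adjacent transpositions `(i, i+1)`, each satisfying `σ(i) > σ(i+1)`. -/
def IsBubbleStep {n : ℕ} (σ t : Equiv.Perm (Fin n)) : Prop :=
  t ≠ 1 ∧ ∃ l : List (Fin n),
    l.Pairwise (fun i j => (i : ℕ) + 2 ≤ (j : ℕ)) ∧
    (∀ i ∈ l, ∃ h : (i : ℕ) + 1 < n, σ ⟨(i : ℕ) + 1, h⟩ < σ i) ∧
    t = (l.map fun i : Fin n =>
      (if h : (i : ℕ) + 1 < n then Equiv.swap i ⟨(i : ℕ) + 1, h⟩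
       else 1 : Equiv.Perm (Fin n))).prod

/-- The number of inversions of `σ`: pairs `i < j` with `σ(i) > σ(j)`. -/
def inversions {n : ℕ} (σ : Equiv.Perm (Fin n)) : ℕ :=
  (Finset.univ.filter fun p : Fin n × Fin n => p.1 < p.2 ∧ σ p.2 < σ p.1).card

/-- The cyclic shift by `s` on `{0,…,n-1}`: `i ↦ (i + s) mod n`. -/
def cyclicShift (n s : ℕ) : Equiv.Perm (Fin n) := (finRotate n) ^ s

open Classical in
/-- Number of positions `q < p` (with `q ≥ -N`) holding a value larger than `k`. -/
noncomputable def bsCnt (N : ℤ) (X : ℤ → ℤ) (k p : ℤ) : ℤ :=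
  ∑ q ∈ Finset.Ico (-N) p, if k < X q then 1 else 0

/-- Reflection of a sequence. -/
def bsRefl (X : ℤ → ℤ) : ℤ → ℤ := fun q => - X (-q)

def bsInv (N w t : ℤ) (X : ℤ → ℤ) : Prop :=
  ∀ k p : ℤ, p ≤ k → k < X p →
    k + t - 2 * (w - 1 - bsCnt N X k p) ≤ p ∧
    (t ≤ 2 * (p - k + (w - 1 - bsCnt N X k p)) ∨
      (t - 1 ≤ 2 * (p - k + (w - 1 - bsCnt N X k p)) ∧ X (p + 1) < X (p + 2)) ∨
      k < X (p + 1) ∨ k < X (p + 2))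

def bsBal (N : ℤ) (X : ℤ → ℤ) : Prop :=
  ∀ k : ℤ, bsCnt N X k (k + 1) = bsCnt N (bsRefl X) (-k - 1) (-k)

def bsSupp (N : ℤ) (X : ℤ → ℤ) : Prop := ∀ q : ℤ, q < -N ∨ N < q → X q = q

structure BsStep (N : ℤ) (X Y : ℤ → ℤ) (s : ℤ → Prop) : Prop where
  bd : ∀ p, s p → -N ≤ p ∧ p + 1 ≤ N
  disj : ∀ p, s p → ¬ s (p + 1)
  desc : ∀ p, s p → X (p + 1) < X p
  center : ∀ k, k < X k → X (k + 1) ≤ k → s k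
  right : ∀ p, X (p + 1) < X p → p + 1 < X p → s p ∨ s (p + 1)
  left : ∀ p, X (p + 1) < X p → X (p + 1) < p → s p ∨ s (p - 1)
  val1 : ∀ p, s p → Y p = X (p + 1)
  val2 : ∀ p, s p → Y (p + 1) = X p
  val3 : ∀ p, ¬ s p → ¬ s (p - 1) → Y p = X p

theorem bsCnt_succ (N : ℤ) (X : ℤ → ℤ) (k p : ℤ) (hp : -N ≤ p) :
    bsCnt N X k (p + 1) = bsCnt N X k p + (if k < X p then 1 else 0) := by
  unfold bsCnt
  rw [← Finset.insert_Ico_right_eq_Ico_add_one hp, Finset.sum_insert (by simp)]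
  split_ifs <;> ring

theorem bsCnt_zero (N : ℤ) (X : ℤ → ℤ) (k p : ℤ) (hp : p ≤ -N) : bsCnt N X k p = 0 := by
  unfold bsCnt
  rw [Finset.Ico_eq_empty (by omega)]; simp

theorem bsCnt_nonneg (N : ℤ) (X : ℤ → ℤ) (k p : ℤ) : 0 ≤ bsCnt N X k p := by
  unfold bsCnt
  apply Finset.sum_nonneg
  intro i _; split_ifs <;> simp

theorem bsCnt_step {N : ℤ} {X Y : ℤ → ℤ} {s : ℤ → Prop} (h : BsStep N X Y s) (k p : ℤ)
    (hp : -N ≤ p) :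
    (s (p - 1) → bsCnt N Y k p = bsCnt N X k (p - 1) + (if k < X p then 1 else 0)) ∧
    (¬ s (p - 1) → bsCnt N Y k p = bsCnt N X k p) := by
  induction p, hp using Int.leInduction with
  | base =>
    refine ⟨fun hs => ?_, fun _ => ?_⟩
    · have := h.bd _ hs; omega
    · rw [bsCnt_zero _ _ _ _ le_rfl, bsCnt_zero _ _ _ _ le_rfl]
  | succ p hp ih =>
    rw [bsCnt_succ _ _ _ _ hp, bsCnt_succ _ _ _ _ hp, show p + 1 - 1 = p by ring]
    refine ⟨fun hs => ?_, fun hs => ?_⟩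
    · have h1 : ¬ s (p - 1) := fun h' => h.disj _ h' (by simpa using hs)
      rw [ih.2 h1, h.val1 _ hs]
    · by_cases h1 : s (p - 1)
      · have hb := h.bd _ h1
        have h2 := bsCnt_succ N X k (p - 1) hb.1
        have h3 := h.val2 _ h1
        rw [show p - 1 + 1 = p by ring] at h2 h3
        rw [ih.1 h1, h3, h2]; ring
      · rw [ih.2 h1, h.val3 _ hs h1]

/-- the last large entry -/
theorem bsCnt_last (N : ℤ) (X : ℤ → ℤ) (k p : ℤ) (hp : -N ≤ p) (hc : 0 < bsCnt N X k p) :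
    ∃ q, q < p ∧ k < X q ∧ bsCnt N X k q + 1 = bsCnt N X k p := by
  induction p, hp using Int.leInduction with
  | base => rw [bsCnt_zero _ _ _ _ le_rfl] at hc; omega
  | succ p hp ih =>
    rw [bsCnt_succ _ _ _ _ hp] at hc ⊢
    by_cases h : k < X p
    · exact ⟨p, by omega, h, by simp [h]⟩
    · simp only [h, if_false, add_zero] at hc ⊢
      obtain ⟨q, h1, h2, h3⟩ := ih hc
      exact ⟨q, by omega, h2, h3⟩

theorem bsInv_step {N w t : ℤ} {X Y : ℤ → ℤ} {s : ℤ → Prop} (h : BsStep N X Y s)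
    (hY : bsSupp N Y) (hB : bsBal N X)
    (hI : bsInv N w t X) (hJ : bsInv N w t (bsRefl X)) : bsInv N w (t + 1) Y := by
  intro k p hpk hkp
  have hpN : -N ≤ p := by
    by_contra hc
    have := hY p (by omega); omega
  have hcs := bsCnt_step h k p hpN
  -- either the entry stayed or it hopped
  have key : (k < X p ∧ bsCnt N Y k p = bsCnt N X k p) ∨
      (k < X (p - 1) ∧ X p ≤ k ∧ s (p - 1) ∧ bsCnt N Y k p = bsCnt N X k (p - 1)) := by
    by_cases h1 : s (p - 1)
    · have hv := h.val2 _ h1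
      have hb := h.bd _ h1
      have h2 := bsCnt_succ N X k (p - 1) hb.1
      rw [show p - 1 + 1 = p by ring] at hv h2
      have h3 : k < X (p - 1) := by omega
      by_cases h4 : k < X p
      · left
        refine ⟨h4, ?_⟩
        rw [hcs.1 h1, h2]; simp [h3, h4]
      · right
        refine ⟨h3, by omega, h1, ?_⟩
        rw [hcs.1 h1]; simp [h4]
    · left
      refine ⟨?_, hcs.2 h1⟩
      by_cases h2 : s p
      · have := h.desc _ h2
        have := h.val1 _ h2
        omega
      · have := h.val3 _ h2 h1
        omega
  rcases key with ⟨hx, hc⟩ | ⟨hx, hx0, hs, hc⟩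
  · rw [hc]
    obtain ⟨hS, hA⟩ := hI k p hpk hx
    rcases eq_or_lt_of_le hpk with rfl | hlt
    · -- at the centre
      suffices hne : t + 1 ≤ 2 * (w - 1 - bsCnt N X p p) by
        exact ⟨by omega, Or.inl (by omega)⟩
      by_contra hcon
      have ht : t = 2 * (w - 1 - bsCnt N X p p) := by omega
      have hb := hB p
      rw [bsCnt_succ _ _ _ _ hpN] at hb
      simp only [hx, if_true] at hb
      have hnn := bsCnt_nonneg N X p p
      have hN : -N ≤ -p := by
        by_contra hc'
        rw [bsCnt_zero _ _ _ (-p) (by omega)] at hb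
        omega
      obtain ⟨q, hq1, hq2, hq3⟩ := bsCnt_last N (bsRefl X) (-p - 1) (-p) hN (by omega)
      have hq4 := (hJ (-p - 1) q (by omega) hq2).1
      have hq5 : q = -p - 1 := by omega
      subst hq5
      have hq6 : -p - 1 < - X (-(-p - 1)) := hq2
      rw [show -(-p - 1) = p + 1 by ring] at hq6
      have hsp := h.center p hx (by omega)
      have := h.val1 p hsp
      omega
    · by_cases hn : k < X (p + 1)
      · obtain ⟨hS', _⟩ := hI k (p + 1) (by omega) hn
        rw [bsCnt_succ _ _ _ _ hpN] at hS'
        simp only [hx, if_true] at hS'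
        refine ⟨by omega, Or.inr (Or.inr ?_)⟩
        by_cases h1 : s p
        · left; have := h.val2 p h1; omega
        · by_cases h2 : s (p + 1)
          · right
            have := h.val2 (p + 1) h2
            rw [show p + 1 + 1 = p + 2 by ring] at this
            omega
          · left
            have := h.val3 (p + 1) h2 (by simpa using h1)
            omega
      · have h1 : ¬ s p := fun h1 => by have := h.val1 p h1; omega
        have h2 : s (p + 1) := (h.right p (by omega) (by omega)).resolve_left h1
        have hd := h.desc _ h2
        have hv1 := h.val1 _ h2
        have hv2 := h.val2 _ h2
        rw [show p + 1 + 1 = p + 2 by ring] at hd hv1 hv2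
        have hA' : t ≤ 2 * (p - k + (w - 1 - bsCnt N X k p)) := by
          rcases hA with hA | hA | hA | hA <;> omega
        exact ⟨by omega, Or.inr (Or.inl ⟨by omega, by omega⟩)⟩
  · rw [hc]
    obtain ⟨hS, hA⟩ := hI k (p - 1) (by omega) hx
    refine ⟨by omega, ?_⟩
    rw [show p - 1 + 1 = p by ring, show p - 1 + 2 = p + 1 by ring] at hA
    rcases hA with hA | hA | hA | hA
    · left; omega
    · left; omega
    · omega
    · right; right
      have h1 : ¬ s p := by simpa using h.disj _ hs
      by_cases h2 : s (p + 1)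
      · right
        have := h.val2 (p + 1) h2
        rw [show p + 1 + 1 = p + 2 by ring] at this
        omega
      · left
        have := h.val3 (p + 1) h2 (by simpa using h1)
        omega

theorem bsRefl_refl (X : ℤ → ℤ) : bsRefl (bsRefl X) = X := by
  funext q; simp [bsRefl]

theorem bsSupp_refl {N : ℤ} {X : ℤ → ℤ} (h : bsSupp N X) : bsSupp N (bsRefl X) := by
  intro q hq
  have := h (-q) (by omega)
  unfold bsRefl; omega

theorem bsBal_refl {N : ℤ} {X : ℤ → ℤ} (h : bsBal N X) : bsBal N (bsRefl X) := by
  intro k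
  have := h (-k - 1)
  rw [bsRefl_refl]
  rw [show -(-k - 1) - 1 = k by ring, show -(-k - 1) = k + 1 by ring,
    show -k - 1 + 1 = -k by ring] at this
  exact this.symm

theorem BsStep.refl {N : ℤ} {X Y : ℤ → ℤ} {s : ℤ → Prop} (h : BsStep N X Y s) :
    BsStep N (bsRefl X) (bsRefl Y) (fun p => s (-p - 1)) where
  bd p hp := by have := h.bd _ hp; omega
  disj p hp h' := by
    apply h.disj _ h'
    rw [show -(p + 1) - 1 + 1 = -p - 1 by ring]; exact hp
  desc p hp := by
    have := h.desc _ hp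
    rw [show -p - 1 + 1 = -p by ring] at this
    unfold bsRefl
    rw [show -(p + 1) = -p - 1 by ring]; omega
  center k h1 h2 := by
    unfold bsRefl at h1 h2
    rw [show -(k + 1) = -k - 1 by ring] at h2
    apply h.center
    · omega
    · rw [show -k - 1 + 1 = -k by ring]; omega
  right p h1 h2 := by
    unfold bsRefl at h1 h2
    rw [show -(p + 1) = -p - 1 by ring] at h1
    have := h.left (-p - 1) (by rw [show -p - 1 + 1 = -p by ring]; omega)
      (by rw [show -p - 1 + 1 = -p by ring]; omega)
    rw [show -(p + 1) - 1 = -p - 1 - 1 by ring]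
    exact this
  left p h1 h2 := by
    unfold bsRefl at h1 h2
    rw [show -(p + 1) = -p - 1 by ring] at h1 h2
    have := h.right (-p - 1) (by rw [show -p - 1 + 1 = -p by ring]; omega)
      (by omega)
    rw [show -(p - 1) - 1 = -p - 1 + 1 by ring]
    exact this
  val1 p hp := by
    have := h.val2 _ hp
    rw [show -p - 1 + 1 = -p by ring] at this
    unfold bsRefl
    rw [show -(p + 1) = -p - 1 by ring]; omega
  val2 p hp := by
    have := h.val1 _ hp
    rw [show -p - 1 + 1 = -p by ring] at this
    unfold bsRefl
    rw [show -(p + 1) = -p - 1 by ring]; omega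
  val3 p h1 h2 := by
    have h3 : ¬ s (-p) := by rwa [show -(p - 1) - 1 = -p by ring] at h2
    have := h.val3 (-p) h3 h1
    unfold bsRefl; omega

theorem bsInv_init {N w : ℤ} {X : ℤ → ℤ} (hX : bsSupp N X)
    (hw : ∀ q, X q - q ≤ w) : bsInv N w 0 X := by
  intro k p hpk hkp
  have hpN : -N ≤ p := by
    by_contra hc
    have := hX p (by omega); omega
  have hcnt : ∀ p, -N ≤ p → bsCnt N X k p ≤ max 0 (p - (k - w + 1)) := by
    intro p hp
    induction p, hp using Int.leInduction with
    | base => rw [bsCnt_zero _ _ _ _ le_rfl]; omega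
    | succ p hp ih =>
      rw [bsCnt_succ _ _ _ _ hp]
      have := hw p
      split_ifs <;> omega
  have h1 := hcnt p hpN
  have h2 := hw p
  exact ⟨by omega, Or.inl (by omega)⟩

theorem bsInv_final {N w t : ℤ} {X : ℤ → ℤ} (ht : 2 * w - 1 ≤ t) (h : bsInv N w t X) (p : ℤ) :
    X p ≤ p := by
  by_contra hc
  have h1 := (h p p le_rfl (by omega)).1
  have := bsCnt_nonneg N X p p
  omega

theorem bs_rec (n : ℤ) (A B : ℤ → Prop) (hA : ∀ p, n ≤ p → ¬ A p) (hB : ∀ p, n ≤ p → ¬ B p) :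
    ∃ f : ℤ → Prop, ∀ p, f p ↔ A p ∨ (B p ∧ ¬ f (p + 1)) := by
  let r : ℕ → Prop := fun j => Nat.rec (motive := fun _ => Prop) False
    (fun j ih => A (n - j - 1) ∨ (B (n - j - 1) ∧ ¬ ih)) j
  have r0 : ¬ r 0 := fun h => h
  have rs : ∀ j : ℕ, r (j + 1) ↔ A (n - j - 1) ∨ (B (n - j - 1) ∧ ¬ r j) := fun j => Iff.rfl
  refine ⟨fun p => r (n - p).toNat, fun p => ?_⟩
  rcases le_or_gt n p with h | h
  · have h0 : (n - p).toNat = 0 := by omega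
    have := hA p h
    have := hB p h
    simp only [h0]
    tauto
  · obtain ⟨j, hj⟩ : ∃ j : ℕ, (n - p).toNat = j + 1 := ⟨(n - p).toNat - 1, by omega⟩
    have hj' : (n - (p + 1)).toNat = j := by omega
    have hp : n - j - 1 = p := by omega
    have := rs j
    rw [hp] at this
    simp only [hj, hj']
    exact this

theorem bs_rec' (A B : ℤ → Prop) (hA : ∀ p, p < 0 → ¬ A p) (hB : ∀ p, p < 0 → ¬ B p) :
    ∃ f : ℤ → Prop, ∀ p, f p ↔ A p ∨ (B p ∧ ¬ f (p - 1)) := by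
  obtain ⟨f, hf⟩ := bs_rec 1 (fun p => A (-p)) (fun p => B (-p))
    (fun p hp => hA _ (by omega)) (fun p hp => hB _ (by omega))
  refine ⟨fun p => f (-p), fun p => ?_⟩
  have := hf (-p)
  rw [neg_neg, show -p + 1 = -(p - 1) by ring] at this
  exact this

/-- The swap set of the greedy parallel bubblesort. -/
theorem bs_exists (n : ℤ) (X : ℤ → ℤ) (h1 : ∀ q, q < 0 ∨ n ≤ q → X q = q)
    (h2 : ∀ q, 0 ≤ q → q < n → 0 ≤ X q ∧ X q < n) :
    ∃ s : ℤ → Prop, (∀ p, s p → 0 ≤ p ∧ p + 1 < n) ∧ (∀ p, s p → ¬ s (p + 1)) ∧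
      (∀ p, s p → X (p + 1) < X p) ∧ (∀ k, k < X k → X (k + 1) ≤ k → s k) ∧
      (∀ p, X (p + 1) < X p → p + 1 < X p → s p ∨ s (p + 1)) ∧
      (∀ p, X (p + 1) < X p → X (p + 1) < p → s p ∨ s (p - 1)) := by
  have hd : ∀ p, X (p + 1) < X p → 0 ≤ p ∧ p + 1 < n := by
    intro p hp
    have a1 := h1 p
    have a2 := h1 (p + 1)
    have a3 := h2 p
    have a4 := h2 (p + 1)
    omega
  obtain ⟨r, hr⟩ := bs_rec n (fun p => p < X p ∧ X (p + 1) ≤ p)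
    (fun p => X (p + 1) < X p ∧ p + 1 ≤ X (p + 1))
    (fun p hp h => by have := hd p (by omega); omega)
    (fun p hp h => by have := hd p (by omega); omega)
  have hrd : ∀ p, r p → X (p + 1) < X p := by
    intro p hp
    rcases (hr p).1 hp with h | h
    · omega
    · exact h.1.1
  have hrp : ∀ p, r p → p < X p := by
    intro p hp
    rcases (hr p).1 hp with h | h <;> omega
  obtain ⟨s, hs⟩ := bs_rec' r (fun p => X (p + 1) < X p ∧ X p ≤ p)
    (fun p hp h => by have := hd p (hrd p h); omega)
    (fun p hp h => by have := hd p h.1; omega)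
  have hsd : ∀ p, s p → X (p + 1) < X p := by
    intro p hp
    rcases (hs p).1 hp with h | h
    · exact hrd p h
    · exact h.1.1
  refine ⟨s, fun p hp => hd p (hsd p hp), ?_, hsd, ?_, ?_, ?_⟩
  · intro p hp hp'
    rcases (hs (p + 1)).1 hp' with h | h
    · have hx := hrp _ h
      rcases (hs p).1 hp with h' | h'
      · rcases (hr p).1 h' with h'' | h''
        · omega
        · exact h''.2 h
      · omega
    · apply h.2
      simpa using hp
  · intro k hk1 hk2
    exact (hs k).2 (Or.inl ((hr k).2 (Or.inl ⟨hk1, hk2⟩)))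
  · intro p hp1 hp2
    by_cases hq : r p
    · exact Or.inl ((hs p).2 (Or.inl hq))
    · right
      have := hr p
      apply (hs (p + 1)).2
      left
      by_contra hc
      apply hq
      rw [this]
      by_cases hz : X (p + 1) ≤ p
      · left; omega
      · right; exact ⟨⟨hp1, by omega⟩, hc⟩
  · intro p hp1 hp2
    by_cases hz : X p ≤ p
    · by_cases hq : s (p - 1)
      · exact Or.inr hq
      · exact Or.inl ((hs p).2 (Or.inr ⟨⟨hp1, hz⟩, hq⟩))
    · exact Or.inl ((hs p).2 (Or.inl ((hr p).2 (Or.inl ⟨by omega, by omega⟩))))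

/-- Extension of a permutation of `Fin n` to the integers. -/
def bsExt {n : ℕ} (y : Equiv.Perm (Fin n)) (q : ℤ) : ℤ :=
  if h : 0 ≤ q ∧ q < n then ((y ⟨q.toNat, by omega⟩ : Fin n) : ℤ) else q

theorem bsExt_coe {n : ℕ} (y : Equiv.Perm (Fin n)) (i : Fin n) :
    bsExt y (i : ℤ) = ((y i : Fin n) : ℤ) := by
  have : (0 : ℤ) ≤ (i : ℤ) ∧ ((i : ℕ) : ℤ) < n := ⟨by omega, by have := i.2; omega⟩
  simp [bsExt]

theorem bsExt_out {n : ℕ} (y : Equiv.Perm (Fin n)) (q : ℤ) (h : q < 0 ∨ (n : ℤ) ≤ q) :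
    bsExt y q = q := by
  unfold bsExt
  rw [dif_neg (by omega)]

theorem bs_fin {n : ℕ} (q : ℤ) (h0 : 0 ≤ q) (h1 : q < n) : ∃ i : Fin n, (i : ℤ) = q :=
  ⟨⟨q.toNat, by omega⟩, by simp [h0]⟩

theorem bsExt_in {n : ℕ} (y : Equiv.Perm (Fin n)) (q : ℤ) (h0 : 0 ≤ q) (h1 : q < n) :
    0 ≤ bsExt y q ∧ bsExt y q < n := by
  obtain ⟨i, rfl⟩ := bs_fin q h0 h1
  rw [bsExt_coe]
  have := (y i).2
  omega

theorem bsExt_inv {n : ℕ} (y z : Equiv.Perm (Fin n)) (h : z * y = 1) (q : ℤ) :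
    bsExt z (bsExt y q) = q := by
  by_cases hq : q < 0 ∨ (n : ℤ) ≤ q
  · rw [bsExt_out y q hq, bsExt_out z q hq]
  · obtain ⟨i, rfl⟩ := bs_fin (n := n) q (by omega) (by omega)
    rw [bsExt_coe, bsExt_coe, ← Equiv.Perm.mul_apply, h]; rfl

theorem bsExt_supp {n : ℕ} (y : Equiv.Perm (Fin n)) : bsSupp n (bsExt y) := by
  intro q hq
  exact bsExt_out y q (by omega)

theorem bsCnt_card (N : ℤ) (X : ℤ → ℤ) (k p : ℤ) :
    bsCnt N X k p = (((Finset.Ico (-N) p).filter (fun q => k < X q)).card : ℤ) := by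
  unfold bsCnt
  rw [Finset.card_filter]
  push_cast
  apply Finset.sum_congr rfl
  intro q _
  split_ifs <;> rfl

theorem bsExt_bal {n : ℕ} (y : Equiv.Perm (Fin n)) : bsBal n (bsExt y) := by
  intro k
  set X := bsExt y with hX
  have hsupp : ∀ q, q < 0 ∨ (n : ℤ) ≤ q → X q = q := bsExt_out y
  have hin : ∀ q : ℤ, 0 ≤ q → q < (n : ℤ) → 0 ≤ X q ∧ X q < (n : ℤ) := bsExt_in y
  rw [bsCnt_card, bsCnt_card]
  let S : Finset ℤ := Finset.Icc (-(n : ℤ)) n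
  let A := S.filter (fun q => q ≤ k)
  let B := S.filter (fun q => X q ≤ k)
  have hAB : A.card = B.card := by
    symm
    apply Finset.card_nbij' (fun q => X q) (fun q => bsExt y⁻¹ q)
    · intro q hq
      simp only [A, B, S, Finset.coe_filter, Finset.mem_Icc, Set.mem_ofPred_eq] at hq ⊢
      have a1 := hsupp q
      have a2 := hin q
      omega
    · intro q hq
      simp only [A, B, S, Finset.coe_filter, Finset.mem_Icc, Set.mem_ofPred_eq] at hq ⊢
      have a1 := bsExt_out y⁻¹ q
      have a2 := bsExt_in y⁻¹ q
      have a3 : X (bsExt y⁻¹ q) = q := bsExt_inv y⁻¹ y (by simp) q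
      rw [a3]
      omega
    · intro q _
      exact bsExt_inv y y⁻¹ (by simp) q
    · intro q _
      exact bsExt_inv y⁻¹ y (by simp) q
  have h1 : (Finset.Ico (-(n : ℤ)) (k + 1)).filter (fun q => k < X q) = A \ B := by
    ext q
    simp only [A, B, S, Finset.mem_filter, Finset.mem_Ico, Finset.mem_sdiff, Finset.mem_Icc]
    have a1 := hsupp q
    omega
  have h2 : ((Finset.Ico (-(n : ℤ)) (-k)).filter (fun q => -k - 1 < bsRefl X q)).card
      = (B \ A).card := by
    apply Finset.card_nbij' (fun q => -q) (fun q => -q)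
    · intro q hq
      rw [Finset.mem_coe] at hq ⊢
      simp only [A, B, S, Finset.mem_filter, Finset.mem_Icc,
        Finset.mem_Ico, Finset.mem_sdiff] at hq ⊢
      simp only [bsRefl] at hq
      have a1 := hsupp (-q)
      omega
    · intro q hq
      rw [Finset.mem_coe] at hq ⊢
      simp only [A, B, S, Finset.mem_filter, Finset.mem_Icc,
        Finset.mem_Ico, Finset.mem_sdiff] at hq ⊢
      simp only [bsRefl, neg_neg]
      have a1 := hsupp q
      omega
    · intro q _; simp
    · intro q _; simp
  rw [h1, h2, Finset.card_sdiff_comm hAB]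

theorem bs_perm {n : ℕ} (s : ℤ → Prop) (hb : ∀ p, s p → 0 ≤ p ∧ p + 1 < (n : ℤ))
    (hd : ∀ p, s p → ¬ s (p + 1)) :
    ∃ τ : Equiv.Perm (Fin n), τ * τ = 1 ∧ ∀ i : Fin n,
      (s i → ((τ i : Fin n) : ℤ) = i + 1) ∧ (s ((i : ℤ) - 1) → ((τ i : Fin n) : ℤ) = i - 1) ∧
      (¬ s i → ¬ s ((i : ℤ) - 1) → τ i = i) := by
  have hex : ∀ i : Fin n, ∃ j : Fin n,
      (s i → (j : ℤ) = i + 1) ∧ (s ((i : ℤ) - 1) → (j : ℤ) = i - 1) ∧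
      (¬ s i → ¬ s ((i : ℤ) - 1) → j = i) := by
    intro i
    by_cases h1 : s i
    · obtain ⟨j, hj⟩ := bs_fin (n := n) ((i : ℤ) + 1) (by omega) (hb _ h1).2
      refine ⟨j, fun _ => hj, fun h2 => ?_, fun h => absurd h1 h⟩
      exact absurd (by simpa using h1) (hd _ h2)
    · by_cases h2 : s ((i : ℤ) - 1)
      · have := hb _ h2
        obtain ⟨j, hj⟩ := bs_fin (n := n) ((i : ℤ) - 1) (by omega) (by omega)
        exact ⟨j, fun h => absurd h h1, fun _ => hj, fun _ h => absurd h2 h⟩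
      · exact ⟨i, fun h => absurd h h1, fun h => absurd h h2, fun _ _ => rfl⟩
  choose f hf using hex
  have hinv : Function.Involutive f := by
    intro i
    by_cases h1 : s i
    · have a := (hf i).1 h1
      have b := (hf (f i)).2.1 (by rw [a]; simpa using h1)
      apply Fin.ext; omega
    · by_cases h2 : s ((i : ℤ) - 1)
      · have a := (hf i).2.1 h2
        have b := (hf (f i)).1 (by rw [a]; exact h2)
        apply Fin.ext; omega
      · have a := (hf i).2.2 h1 h2
        rw [a, a]
  refine ⟨hinv.toPerm f, ?_, hf⟩
  ext i
  simp [hinv i]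

theorem bs_step {n : ℕ} (y : Equiv.Perm (Fin n)) :
    ∃ τ : Equiv.Perm (Fin n), τ * τ = 1 ∧ bandwidth τ ≤ 1 ∧
      ∃ s, BsStep n (bsExt y) (bsExt (y * τ)) s := by
  obtain ⟨s, hb, hd, hdesc, hc, hr, hl⟩ := bs_exists n (bsExt y) (bsExt_out y) (bsExt_in y)
  obtain ⟨τ, hτ, hv⟩ := bs_perm s hb hd
  refine ⟨τ, hτ, ?_, s, ?_⟩
  · unfold bandwidth
    apply Finset.sup_le
    intro i _
    obtain ⟨v1, v2, v3⟩ := hv i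
    by_cases h1 : s i
    · have := v1 h1; omega
    · by_cases h2 : s ((i : ℤ) - 1)
      · have := v2 h2; omega
      · rw [v3 h1 h2]; simp
  · have hval : ∀ i : Fin n, bsExt (y * τ) (i : ℤ) = bsExt y ((τ i : Fin n) : ℤ) := by
      intro i
      rw [bsExt_coe, bsExt_coe]; rfl
    refine ⟨fun p hp => ?_, hd, hdesc, hc, hr, hl, ?_, ?_, ?_⟩
    · have := hb p hp; omega
    · intro p hp
      have := hb p hp
      obtain ⟨i, rfl⟩ := bs_fin (n := n) p (by omega) (by omega)
      rw [hval, (hv i).1 hp]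
    · intro p hp
      have := hb p hp
      obtain ⟨i, hi⟩ := bs_fin (n := n) (p + 1) (by omega) (by omega)
      have hp' : p = (i : ℤ) - 1 := by omega
      rw [← hi, hval, (hv i).2.1 (by rwa [← hp']), hp']
    · intro p h1 h2
      by_cases hq : p < 0 ∨ (n : ℤ) ≤ p
      · rw [bsExt_out _ _ hq, bsExt_out _ _ hq]
      · obtain ⟨i, rfl⟩ := bs_fin (n := n) p (by omega) (by omega)
        rw [hval, (hv i).2.2 h1 h2]

theorem bs_main {n : ℕ} (σ : Equiv.Perm (Fin n)) (m : ℕ) :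
    ∃ (L : List (Equiv.Perm (Fin n))) (y : Equiv.Perm (Fin n)),
      L.length = m ∧ (∀ τ ∈ L, bandwidth τ ≤ 1) ∧ y * L.prod = σ ∧
      bsInv n (bandwidth σ) m (bsExt y) ∧ bsInv n (bandwidth σ) m (bsRefl (bsExt y)) := by
  induction m with
  | zero =>
    have hbw : ∀ q : ℤ, |bsExt σ q - q| ≤ (bandwidth σ : ℤ) := by
      intro q
      by_cases hq : q < 0 ∨ (n : ℤ) ≤ q
      · rw [bsExt_out _ _ hq]; simp
      · obtain ⟨i, rfl⟩ := bs_fin (n := n) q (by omega) (by omega)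
        rw [bsExt_coe]
        have := Finset.le_sup (f := fun i : Fin n => ((σ i : ℤ) - (i : ℤ)).natAbs)
          (Finset.mem_univ i)
        change _ ≤ bandwidth σ at this
        rw [Int.abs_eq_natAbs]
        exact_mod_cast this
    refine ⟨[], σ, rfl, by simp, by simp, ?_, ?_⟩
    · apply bsInv_init (bsExt_supp σ)
      intro q
      exact (abs_le.1 (hbw q)).2
    · apply bsInv_init (bsSupp_refl (bsExt_supp σ))
      intro q
      have := (abs_le.1 (hbw (-q))).1
      unfold bsRefl; omega
  | succ m ih =>
    obtain ⟨L, y, h1, h2, h3, h4, h5⟩ := ih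
    obtain ⟨τ, hτ, hb, s, hs⟩ := bs_step y
    refine ⟨τ :: L, y * τ, by simp [h1], ?_, ?_, ?_, ?_⟩
    · intro ρ hρ
      rcases List.mem_cons.1 hρ with rfl | h
      · exact hb
      · exact h2 ρ h
    · rw [List.prod_cons, mul_assoc, ← mul_assoc τ, hτ, one_mul, h3]
    · push_cast
      exact bsInv_step hs (bsExt_supp _) (bsExt_bal y) h4 h5
    · push_cast
      exact bsInv_step hs.refl (bsSupp_refl (bsExt_supp _)) (bsBal_refl (bsExt_bal y)) h5
        (by rwa [bsRefl_refl])

/-- A permutation of `{1,…,n}` (n ≥ 1) of bandwidth `w > 0` is a product of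
at most `2w - 1` permutations of bandwidth at most 1. -/
theorem stmt_0 (n : ℕ) (hn : 1 ≤ n) (σ : Equiv.Perm (Fin n))
    (hw : 0 < bandwidth σ) :
    ∃ L : List (Equiv.Perm (Fin n)),
      L.length ≤ 2 * bandwidth σ - 1 ∧ (∀ τ ∈ L, bandwidth τ ≤ 1) ∧ L.prod = σ := by
  obtain ⟨L, y, h1, h2, h3, h4, h5⟩ := bs_main σ (2 * bandwidth σ - 1)
  refine ⟨L, h1.le, h2, ?_⟩
  have hy : y = 1 := by
    ext i
    have a := bsInv_final (by omega) h4 (i : ℤ)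
    have b := bsInv_final (by omega) h5 (-(i : ℤ))
    unfold bsRefl at b
    rw [neg_neg, bsExt_coe] at b
    rw [bsExt_coe] at a
    simp only [Equiv.Perm.coe_one, id_eq]
    omega
  rw [← h3, hy, one_mul]
end

section
/- Let σ be a settled Strang canonical permutation of {1,…,n} of bandwidth w > 0. Then σ can be written as a product of at most 2w − 1 permutations of {1,…,n}, each of bandwidth at most 1. -/
namespace OddEven

/-- Exchange `p` and `p+1` for every `p ∈ S`. -/
noncomputable def tau (S : ℕ → Prop) (p : ℕ) : ℕ :=
  open Classical in if S p then p + 1 else if 1 ≤ p ∧ S (p - 1) then p - 1 else p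

/-- Number of positions `< x` carrying a value `> v`. -/
noncomputable def hgt (v : ℕ) (f : ℕ → ℕ) (x : ℕ) : ℕ :=
  open Classical in Nat.count (fun p => v < f p) x

theorem hgt_zero (v f) : hgt v f 0 = 0 := by simp [hgt]

theorem hgt_succ_of_lt {v : ℕ} {f : ℕ → ℕ} {x : ℕ} (h : v < f x) :
    hgt v f (x + 1) = hgt v f x + 1 := by
  simp [hgt, Nat.count_succ, h]

theorem hgt_succ_of_le {v : ℕ} {f : ℕ → ℕ} {x : ℕ} (h : f x ≤ v) :
    hgt v f (x + 1) = hgt v f x := by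
  have : ¬ v < f x := by omega
  simp [hgt, Nat.count_succ, this]

def NonAdj (S : ℕ → Prop) : Prop := ∀ p, S p → ¬ S (p + 1)

theorem tau_of {S : ℕ → Prop} {p : ℕ} (h : S p) : tau S p = p + 1 := by simp [tau, h]

theorem tau_succ_of {S : ℕ → Prop} (hS : NonAdj S) {p : ℕ} (h : S p) : tau S (p + 1) = p := by
  simp [tau, h, hS p h]

theorem tau_other {S : ℕ → Prop} {p : ℕ} (h : ¬ S p) (h' : ∀ q, q + 1 = p → ¬ S q) :
    tau S p = p := by
  unfold tau
  rw [if_neg h, if_neg]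
  rintro ⟨h1, h2⟩
  exact h' (p - 1) (by omega) h2

theorem tau_cases {S : ℕ → Prop} (hS : NonAdj S) (p : ℕ) :
    (S p ∧ tau S p = p + 1) ∨ (∃ q, p = q + 1 ∧ S q ∧ tau S p = q) ∨
      (¬ S p ∧ (∀ q, q + 1 = p → ¬ S q) ∧ tau S p = p) := by
  by_cases h : S p
  · exact Or.inl ⟨h, tau_of h⟩
  · by_cases h' : ∃ q, p = q + 1 ∧ S q
    · obtain ⟨q, rfl, hq⟩ := h'
      exact Or.inr (Or.inl ⟨q, rfl, hq, tau_succ_of hS hq⟩)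
    · have h2 : ∀ q, q + 1 = p → ¬ S q := fun q hq hs => h' ⟨q, hq.symm, hs⟩
      exact Or.inr (Or.inr ⟨h, h2, tau_other h h2⟩)

theorem tau_tau {S : ℕ → Prop} (hS : NonAdj S) (p : ℕ) : tau S (tau S p) = p := by
  rcases tau_cases hS p with ⟨h, e⟩ | ⟨q, rfl, h, e⟩ | ⟨h, h', e⟩
  · rw [e, tau_succ_of hS h]
  · rw [e, tau_of h]
  · rw [e, e]

theorem tau_le {S : ℕ → Prop} (hS : NonAdj S) {c p : ℕ} (hc : ¬ S c) (hp : p ≤ c) :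
    tau S p ≤ c := by
  rcases tau_cases hS p with ⟨h, e⟩ | ⟨q, rfl, h, e⟩ | ⟨h, h', e⟩
  · have : p ≠ c := fun hh => hc (hh ▸ h)
    omega
  · omega
  · omega

theorem hgt_step_notin {S : ℕ → Prop} (hS : NonAdj S) (v : ℕ) (f : ℕ → ℕ) (x : ℕ) :
    (∀ q, q + 1 = x → ¬ S q) → hgt v (fun p => f (tau S p)) x = hgt v f x := by
  induction x using Nat.strong_induction_on with
  | _ x ih =>
    intro hx
    rcases x with _ | x
    · simp [hgt_zero]
    have hxS : ¬ S x := hx x rfl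
    rcases tau_cases hS x with ⟨h, e⟩ | ⟨q, rfl, h, e⟩ | ⟨h, h', e⟩
    · exact absurd h hxS
    · have h0 := ih q (by omega) (fun r hr hs => hS r hs (hr ▸ h))
      have e2 := tau_of h
      have A : ∀ g : ℕ → ℕ, hgt v g (q + 1 + 1) =
          hgt v g q + (if v < g q then 1 else 0) + (if v < g (q + 1) then 1 else 0) := by
        intro g
        by_cases h1 : v < g q <;> by_cases h2 : v < g (q + 1) <;>
          simp [hgt, Nat.count_succ, h1, h2]
      rw [A, A, h0]
      simp only [e, e2]
      omega
    · have h0 := ih x (by omega) h'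
      by_cases hv : v < f x
      · rw [hgt_succ_of_lt hv, hgt_succ_of_lt (by simpa [e] using hv), h0]
      · rw [hgt_succ_of_le (f := f) (by omega), hgt_succ_of_le (by simpa [e] using hv), h0]

theorem hgt_step_in {S : ℕ → Prop} (hS : NonAdj S) (v : ℕ) (f : ℕ → ℕ) {x : ℕ} (hx : S x) :
    hgt v (fun p => f (tau S p)) (x + 1) = hgt v f x + (if v < f (x + 1) then 1 else 0) := by
  have h0 := hgt_step_notin hS v f x (fun r hr hs => hS r hs (hr ▸ hx))
  have e := tau_of hx
  by_cases hv : v < f (x + 1)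
  · rw [hgt_succ_of_lt (by simpa [e] using hv), h0]; simp [hv]
  · rw [hgt_succ_of_le (by simpa [e] using hv), h0]; simp [hv]

theorem hgt_step_mono {S : ℕ → Prop} (hS : NonAdj S) (v : ℕ) (f : ℕ → ℕ)
    (hd : ∀ p, S p → f (p + 1) < f p) (x : ℕ) :
    hgt v (fun p => f (tau S p)) x ≤ hgt v f x := by
  by_cases h : ∀ q, q + 1 = x → ¬ S q
  · exact (hgt_step_notin hS v f x h).le
  · push Not at h
    obtain ⟨q, rfl, hq⟩ := h
    rw [hgt_step_in hS v f hq]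
    have := hd q hq
    by_cases hv : v < f q
    · rw [hgt_succ_of_lt hv]; split_ifs <;> omega
    · rw [hgt_succ_of_le (by omega), if_neg (by omega)]; omega

theorem hgt_step_active {S : ℕ → Prop} (hS : NonAdj S) (v : ℕ) (f : ℕ → ℕ)
    (hd : ∀ p, S p → f (p + 1) < f p) (x : ℕ) (ha : ¬ S x → f x ≤ f (x + 1)) :
    hgt v (fun p => f (tau S p)) (x + 1) ≤ hgt v f x ∨
    hgt v (fun p => f (tau S p)) (x + 1) + 1 ≤ hgt v f (x + 2) := by
  by_cases h : S x
  · rw [hgt_step_in hS v f h]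
    have := hd x h
    by_cases hv : v < f (x + 1)
    · right
      rw [if_pos hv, hgt_succ_of_lt (x := x + 1) hv, hgt_succ_of_lt (x := x) (by omega)]
    · left; simp [hv]
  · have h1 := ha h
    rw [hgt_step_notin hS v f (x + 1) (by intro q hq; obtain rfl : q = x := by omega
                                          exact h)]
    by_cases hv : v < f x
    · right
      rw [hgt_succ_of_lt (x := x + 1) (by omega), hgt_succ_of_lt (x := x) (by omega)]
    · left; rw [hgt_succ_of_le (by omega)]

theorem hgt_le_of_low {v : ℕ} {f : ℕ → ℕ} {m : ℕ} (h : ∀ p < m, f p ≤ v) (x : ℕ) :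
    hgt v f x ≤ x - m := by
  induction x with
  | zero => simp [hgt_zero]
  | succ x ih =>
    by_cases hv : v < f x
    · have : ¬ x < m := fun hh => by have := h x hh; omega
      rw [hgt_succ_of_lt hv]; omega
    · rw [hgt_succ_of_le (by omega)]; omega

theorem hgt_le_of_surj {v : ℕ} {f : ℕ → ℕ} {m x : ℕ} (hm : m ≤ v + 1)
    (h : ∀ u < m, ∃ p < x, f p = u) : hgt v f x + m ≤ x := by
  classical
  have h1 : hgt v f x = ((Finset.range x).filter (fun p => v < f p)).card := by
    unfold hgt; rw [Nat.count_eq_card_filter_range]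
  have h2 : m ≤ ((Finset.range x).filter (fun p => ¬ v < f p)).card := by
    calc m = (Finset.range m).card := by simp
      _ ≤ (((Finset.range x).filter (fun p => ¬ v < f p)).image f).card := by
        apply Finset.card_le_card
        intro u hu
        rw [Finset.mem_range] at hu
        obtain ⟨p, hp, rfl⟩ := h u hu
        refine Finset.mem_image_of_mem _ ?_
        simp only [Finset.mem_filter, Finset.mem_range]
        omega
      _ ≤ _ := Finset.card_image_le
  have h3 := Finset.card_filter_add_card_filter_not (s := Finset.range x) (fun p => v < f p)
  rw [Finset.card_range] at h3
  omega

theorem hgt_eq_zero {v : ℕ} {f : ℕ → ℕ} {x : ℕ} (h : hgt v f x = 0) : ∀ p < x, f p ≤ v := by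
  induction x with
  | zero => intro p hp; omega
  | succ x ih =>
    by_cases hv : v < f x
    · rw [hgt_succ_of_lt hv] at h; omega
    · rw [hgt_succ_of_le (by omega)] at h
      intro p hp
      rcases Nat.lt_succ_iff_lt_or_eq.mp hp with h1 | rfl
      · exact ih h p h1
      · omega

def Cut (f : ℕ → ℕ) (c : ℕ) : Prop := ∀ j ≤ c, f j ≤ c

def Tr (f : ℕ → ℕ) (q : ℕ) : Prop := q < f q ∧ f (q + 1) < q + 1

noncomputable def ee (f : ℕ → ℕ) (p : ℕ) : ℕ :=
  sInf {q | Tr f q ∧ ∀ c, (p ≤ c ∧ c < q ∨ q ≤ c ∧ c < p) → ¬ Cut f c}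

theorem ee_congr {f : ℕ → ℕ} {p r : ℕ} (h : ∀ c, (p ≤ c ∧ c < r ∨ r ≤ c ∧ c < p) → ¬ Cut f c) :
    ee f p = ee f r := by
  unfold ee
  congr 1
  ext q
  simp only [Set.mem_ofPred_eq]
  refine and_congr_right fun _ => ⟨fun H c hc => ?_, fun H c hc => ?_⟩
  · by_cases h1 : (p ≤ c ∧ c < r ∨ r ≤ c ∧ c < p)
    · exact h c h1
    · exact H c (by omega)
  · by_cases h1 : (p ≤ c ∧ c < r ∨ r ≤ c ∧ c < p)
    · exact h c h1
    · exact H c (by omega)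

def Uniq (f : ℕ → ℕ) : Prop :=
  ∀ q r, Tr f q → Tr f r → q < r → ∃ c, q ≤ c ∧ c < r ∧ Cut f c

theorem ee_of_tr {f : ℕ → ℕ} (hu : Uniq f) {q : ℕ} (hq : Tr f q) : ee f q = q := by
  unfold ee
  have : {r | Tr f r ∧ ∀ c, (q ≤ c ∧ c < r ∨ r ≤ c ∧ c < q) → ¬ Cut f c} = {q} := by
    ext r
    simp only [Set.mem_ofPred_eq, Set.mem_singleton_iff]
    constructor
    · rintro ⟨hr, h⟩
      rcases lt_trichotomy q r with h1 | h1 | h1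
      · obtain ⟨c, h2, h3, h4⟩ := hu q r hq hr h1
        exact absurd h4 (h c (by omega))
      · exact h1.symm
      · obtain ⟨c, h2, h3, h4⟩ := hu r q hr hq h1
        exact absurd h4 (h c (by omega))
    · rintro rfl
      exact ⟨hq, fun c hc => by omega⟩
  rw [this]
  simp

/-- The set of exchanges at time `t` from the state `g`. -/
def SS (f g : ℕ → ℕ) (t p : ℕ) : Prop :=
  ¬ Cut f p ∧ (p + t + ee f p) % 2 = 0 ∧ g (p + 1) < g p

noncomputable def st (f : ℕ → ℕ) : ℕ → ℕ → ℕ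
  | 0 => f
  | t + 1 => fun p => st f t (tau (SS f (st f t) t) p)

theorem SS_nonAdj (f g : ℕ → ℕ) (t : ℕ) : NonAdj (SS f g t) := by
  rintro p ⟨h1, h2, _⟩ ⟨h3, h4, _⟩
  have : ee f p = ee f (p + 1) := ee_congr (fun c hc => by
    obtain rfl : c = p := by omega
    exact h1)
  omega

theorem cut_surj {f : ℕ → ℕ} (hf : Function.Injective f) {c : ℕ} (hc : Cut f c) :
    ∀ u ≤ c, ∃ p ≤ c, f p = u := by
  intro u hu
  have hmap : Set.MapsTo f (Finset.range (c + 1)) (Finset.range (c + 1)) := by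
    intro j hj
    simp only [Finset.coe_range, Set.mem_Iio] at hj ⊢
    have := hc j (by omega)
    omega
  have := Finset.surjOn_of_injOn_of_card_le f hmap hf.injOn le_rfl
  obtain ⟨p, hp, rfl⟩ := this (show u ∈ ((Finset.range (c + 1) : Finset ℕ) : Set ℕ) by
    simp only [Finset.coe_range, Set.mem_Iio]; omega)
  simp only [Finset.coe_range, Set.mem_Iio] at hp
  exact ⟨p, by omega, rfl⟩

theorem st_cut {f : ℕ → ℕ} (hf : Function.Injective f) {c : ℕ} (hc : Cut f c) (t : ℕ) :
    (∀ p ≤ c, st f t p ≤ c) ∧ ∀ u ≤ c, ∃ p ≤ c, st f t p = u := by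
  induction t with
  | zero => exact ⟨hc, cut_surj hf hc⟩
  | succ t ih =>
    have hS := SS_nonAdj f (st f t) t
    have hcS : ¬ SS f (st f t) t c := fun h => h.1 hc
    refine ⟨fun p hp => ih.1 _ (tau_le hS hcS hp), fun u hu => ?_⟩
    obtain ⟨p, hp, rfl⟩ := ih.2 u hu
    refine ⟨_, tau_le hS hcS hp, ?_⟩
    simp only [st]
    rw [tau_tau hS]

theorem st_mono (f : ℕ → ℕ) (v t x : ℕ) : hgt v (st f (t + 1)) x ≤ hgt v (st f t) x :=
  hgt_step_mono (SS_nonAdj f (st f t) t) v (st f t) (fun _ h => h.2.2) x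

/-- Key invariant. -/
theorem key {f : ℕ → ℕ} (hf : Function.Injective f) (v T : ℕ)
    (hpar : (v + T + ee f v) % 2 = 1)
    (h0 : ∀ x, x ≤ v + 1 + T → v + 1 ≤ x + T → (x + v + 1 + T) % 2 = 0 →
      2 * hgt v f x + (v + 1) ≤ T + x) (t s : ℕ) (hts : t + s = T) :
    ∀ x, x ≤ v + 1 + s → v + 1 ≤ x + s → (x + v + 1 + s) % 2 = 0 →
      2 * hgt v (st f t) x + (v + 1) ≤ s + x := by
  induction t generalizing s with
  | zero =>
    obtain rfl : s = T := by omega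
    exact h0
  | succ t ih =>
    intro x hx1 hx2 hx3
    have IH := ih (s + 1) (by omega)
    rcases x with _ | p
    · rw [hgt_zero]; omega
    by_cases hA : ∃ c, p ≤ c ∧ c ≤ v ∧ Cut f c
    · obtain ⟨c, h1, h2, h3⟩ := hA
      have := hgt_le_of_low (v := v) (f := st f (t + 1)) (m := c + 1)
        (fun q hq => by have := (st_cut hf h3 (t + 1)).1 q (by omega); omega) (p + 1)
      omega
    by_cases hB : ∃ c, v ≤ c ∧ c ≤ p ∧ Cut f c
    · obtain ⟨c, h1, h2, h3⟩ := hB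
      have := hgt_le_of_surj (v := v) (f := st f (t + 1)) (m := v + 1) (x := p + 1) le_rfl
        (fun u hu => by
          obtain ⟨q, hq, e⟩ := (st_cut hf h3 (t + 1)).2 u (by omega)
          exact ⟨q, by omega, e⟩)
      omega
    push Not at hA hB
    have hcut : ¬ Cut f p := by
      rcases le_total p v with h | h
      · exact hA p le_rfl h
      · exact hB p h le_rfl
    have he : ee f p = ee f v := ee_congr (fun c hc => by
      rcases hc with hc | hc
      · exact hA c hc.1 hc.2.le
      · exact hB c hc.1 hc.2.le)
    have := hgt_step_active (SS_nonAdj f (st f t) t) v (st f t) (fun _ h => h.2.2) p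
      (fun hn => by
        by_contra hlt
        exact hn ⟨hcut, by omega, by omega⟩)
    have i1 := IH p (by omega) (by omega) (by omega)
    have i2 := IH (p + 2) (by omega) (by omega) (by omega)
    change hgt v (st f (t + 1)) (p + 1) ≤ _ ∨ hgt v (st f (t + 1)) (p + 1) + 1 ≤ _ at this
    omega

theorem sorted {f : ℕ → ℕ} (hf : Function.Bijective f) (w : ℕ) (hw : 0 < w)
    (hb : ∀ p, f p ≤ p + w ∧ p ≤ f p + w) (hu : Uniq f) (v : ℕ) :
    st f (2 * w - 1) v ≤ v := by
  have L : ∀ x, hgt v f x ≤ x - (v + 1 - w) := hgt_le_of_low (fun p hp => by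
    have := hb p; omega)
  have R : ∀ x, hgt v f x + min (v + 1) (x - w) ≤ x := fun x =>
    hgt_le_of_surj (min_le_left _ _) (fun u hu => by
      obtain ⟨p, rfl⟩ := hf.2 u
      have := hb p
      exact ⟨p, by omega, rfl⟩)
  suffices h : hgt v (st f (2 * w - 1)) (v + 1) = 0 from hgt_eq_zero h v (by omega)
  by_cases hs : (v + ee f v) % 2 = 0
  · have := key hf.1 v (2 * w - 1) (by omega) (fun x h1 h2 h3 => by
      have := L x; have := R x
      omega) (2 * w - 1) 0 (by omega) (v + 1) (by omega) (by omega) (by omega)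
    omega
  · have hT : ¬ Tr f v := fun h => by
      rw [ee_of_tr hu h] at hs; omega
    have hmid : hgt v f (v + 1) + 1 ≤ w := by
      by_cases h1 : v < f v
      · have h2 : v + 1 ≤ f (v + 1) := by
          by_contra h; exact hT ⟨h1, by omega⟩
        have := hgt_le_of_surj (v := v) (f := f) (m := min (v + 1) (v + 2 - w)) (x := v + 1)
          (min_le_left _ _) (fun u hu => by
            obtain ⟨p, rfl⟩ := hf.2 u
            have := hb p
            refine ⟨p, ?_, rfl⟩
            by_contra hp
            obtain rfl : p = v + 1 := by omega
            omega)
        omega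
      · rw [hgt_succ_of_le (by omega)]
        have := L v
        omega
    have := key hf.1 v (2 * w - 2) (by omega) (fun x h1 h2 h3 => by
      have := L x; have := R x
      by_cases hx : x = v + 1
      · subst hx; omega
      · omega) (2 * w - 2) 0 (by omega) (v + 1) (by omega) (by omega) (by omega)
    have h2 := st_mono f v (2 * w - 2) (v + 1)
    rw [show 2 * w - 2 + 1 = 2 * w - 1 by omega] at h2
    omega

/-- Extension of a permutation of `Fin n` to `ℕ`. -/
def ext0 {n : ℕ} (σ : Equiv.Perm (Fin n)) (p : ℕ) : ℕ :=
  if h : p < n then (σ ⟨p, h⟩ : ℕ) else p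

theorem ext0_lt {n : ℕ} (σ : Equiv.Perm (Fin n)) {p : ℕ} (h : p < n) :
    ext0 σ p = (σ ⟨p, h⟩ : ℕ) := by simp [ext0, h]

theorem ext0_ge {n : ℕ} (σ : Equiv.Perm (Fin n)) {p : ℕ} (h : n ≤ p) :
    ext0 σ p = p := by simp [ext0, h]

theorem ext0_ext0 {n : ℕ} (σ : Equiv.Perm (Fin n)) (p : ℕ) : ext0 σ⁻¹ (ext0 σ p) = p := by
  by_cases h : p < n
  · rw [ext0_lt σ h, ext0_lt _ (σ ⟨p, h⟩).2]; simp
  · rw [ext0_ge σ (by omega), ext0_ge _ (by omega)]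

theorem ext0_bij {n : ℕ} (σ : Equiv.Perm (Fin n)) : Function.Bijective (ext0 σ) := by
  refine Function.bijective_iff_has_inverse.mpr ⟨ext0 σ⁻¹, ext0_ext0 σ, ?_⟩
  intro p
  simpa using ext0_ext0 σ⁻¹ p

theorem cut_ext0 {n : ℕ} (σ : Equiv.Perm (Fin n)) (c : Fin n) (h : IsCutPoint σ c) :
    Cut (ext0 σ) c := by
  intro j hj
  have hjn : j < n := by have := c.2; omega
  rw [ext0_lt σ hjn]
  exact h ⟨j, hjn⟩ hj

theorem cut_big {n : ℕ} (σ : Equiv.Perm (Fin n)) {c : ℕ} (h : n ≤ c + 1) : Cut (ext0 σ) c := by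
  intro j hj
  by_cases hjn : j < n
  · rw [ext0_lt σ hjn]; have := (σ ⟨j, hjn⟩).2; omega
  · rw [ext0_ge σ (by omega)]; exact hj

theorem uniq_ext0 {n : ℕ} (σ : Equiv.Perm (Fin n)) (h : RowSettled σ) : Uniq (ext0 σ) := by
  rintro q r ⟨_, hq⟩ ⟨hr, _⟩ hqr
  by_contra hno
  push Not at hno
  have hrn : r < n := by
    by_contra hh
    rw [ext0_ge σ (by omega)] at hr; omega
  have hne : q + 1 ≠ r := by rintro rfl; omega
  have hqn : q + 1 < n := by omega
  refine h ⟨q + 1, hqn⟩ ⟨r, hrn⟩ (by simp only [Fin.mk_lt_mk]; omega) ⟨?_, ?_⟩ ⟨?_, ?_⟩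
  · simp only [Fin.mk_le_mk]; omega
  · intro c hc1 hc2 hc
    have h1 : q + 1 ≤ (c : ℕ) := hc1
    have h2 : (c : ℕ) < r := hc2
    exact hno c (by omega) h2 (cut_ext0 σ c hc)
  · rw [ext0_lt σ hqn] at hq; exact hq
  · rw [ext0_lt σ hrn] at hr; exact hr

theorem bw_le {n : ℕ} (σ : Equiv.Perm (Fin n)) (w : ℕ) :
    bandwidth σ ≤ w ↔ ∀ i, (σ i : ℕ) ≤ i + w ∧ (i : ℕ) ≤ σ i + w := by
  unfold bandwidth
  rw [Finset.sup_le_iff]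
  simp only [Finset.mem_univ, true_implies]
  refine forall_congr' fun i => ?_
  omega

theorem bw_inv_le {n : ℕ} (σ : Equiv.Perm (Fin n)) (w : ℕ) (h : bandwidth σ ≤ w) :
    bandwidth σ⁻¹ ≤ w := by
  rw [bw_le] at h ⊢
  intro i
  have := h (σ⁻¹ i)
  have e : σ (σ⁻¹ i) = i := by simp
  rw [e] at this
  exact ⟨this.2, this.1⟩

theorem bw_inv {n : ℕ} (σ : Equiv.Perm (Fin n)) : bandwidth σ⁻¹ = bandwidth σ :=
  le_antisymm (bw_inv_le σ _ le_rfl) (by simpa using bw_inv_le σ⁻¹ _ le_rfl)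

theorem tau_bound {n : ℕ} {S : ℕ → Prop} (hS : NonAdj S) (hn : ∀ p, S p → p + 1 < n) {p : ℕ}
    (hp : p < n) : tau S p < n := by
  rcases tau_cases hS p with ⟨h, e⟩ | ⟨q, rfl, h, e⟩ | ⟨h, h', e⟩
  · have := hn p h; omega
  · omega
  · omega

noncomputable def tauFin {n : ℕ} {S : ℕ → Prop} (hS : NonAdj S) (hn : ∀ p, S p → p + 1 < n) :
    Equiv.Perm (Fin n) where
  toFun i := ⟨tau S i, tau_bound hS hn i.2⟩
  invFun i := ⟨tau S i, tau_bound hS hn i.2⟩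
  left_inv i := by ext; simp [tau_tau hS]
  right_inv i := by ext; simp [tau_tau hS]

theorem tauFin_bw {n : ℕ} {S : ℕ → Prop} (hS : NonAdj S) (hn : ∀ p, S p → p + 1 < n) :
    bandwidth (tauFin hS hn) ≤ 1 := by
  rw [bw_le]
  intro i
  change tau S i ≤ i + 1 ∧ (i : ℕ) ≤ tau S i + 1
  rcases tau_cases hS i with ⟨h, e⟩ | ⟨q, e', h, e⟩ | ⟨h, h', e⟩ <;> omega

theorem exists_list {n : ℕ} (σ : Equiv.Perm (Fin n)) (t : ℕ) :
    ∃ L : List (Equiv.Perm (Fin n)), L.length = t ∧ (∀ τ ∈ L, bandwidth τ ≤ 1) ∧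
      ∀ i : Fin n, ((σ * L.prod) i : ℕ) = st (ext0 σ) t i := by
  induction t with
  | zero => exact ⟨[], rfl, by simp, fun i => by simp [st, ext0]⟩
  | succ t ih =>
    obtain ⟨L, h1, h2, h3⟩ := ih
    have hS := SS_nonAdj (ext0 σ) (st (ext0 σ) t) t
    have hn : ∀ p, SS (ext0 σ) (st (ext0 σ) t) t p → p + 1 < n := fun p hp => by
      by_contra hh
      exact hp.1 (cut_big σ (by omega))
    refine ⟨L ++ [tauFin hS hn], by simp [h1], ?_, fun i => ?_⟩
    · intro τ hτ
      rw [List.mem_append, List.mem_singleton] at hτ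
      rcases hτ with hτ | rfl
      · exact h2 τ hτ
      · exact tauFin_bw hS hn
    · have := h3 (tauFin hS hn i)
      rw [List.prod_append, List.prod_singleton, ← mul_assoc, Equiv.Perm.mul_apply, this]
      rfl

theorem perm_eq_one {n : ℕ} (ρ : Equiv.Perm (Fin n)) (h : ∀ i, (ρ i : ℕ) ≤ i) : ρ = 1 := by
  have : ∀ m, ∀ i : Fin n, (i : ℕ) = m → ρ i = i := by
    intro m
    induction m using Nat.strong_induction_on with
    | _ m ih =>
      intro i hi
      rcases (h i).lt_or_eq with h1 | h1
      · have := ih (ρ i) (by omega) (ρ i) rfl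
        exact ρ.injective this
      · exact Fin.ext h1
  ext i
  simp [this i i rfl]

theorem inv_list {n : ℕ} (σ : Equiv.Perm (Fin n)) (k : ℕ)
    (h : ∃ L : List (Equiv.Perm (Fin n)),
      L.length ≤ k ∧ (∀ τ ∈ L, bandwidth τ ≤ 1) ∧ L.prod = σ⁻¹) :
    ∃ L : List (Equiv.Perm (Fin n)),
      L.length ≤ k ∧ (∀ τ ∈ L, bandwidth τ ≤ 1) ∧ L.prod = σ := by
  obtain ⟨L, h1, h2, h3⟩ := h
  refine ⟨(L.map (·⁻¹)).reverse, by simpa using h1, ?_, ?_⟩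
  · intro τ hτ
    simp only [List.mem_reverse, List.mem_map] at hτ
    obtain ⟨a, ha, rfl⟩ := hτ
    rw [bw_inv]; exact h2 a ha
  · rw [← List.prod_inv_reverse, h3, inv_inv]

theorem main_row {n : ℕ} (σ : Equiv.Perm (Fin n)) (h : RowSettled σ) (hw : 0 < bandwidth σ) :
    ∃ L : List (Equiv.Perm (Fin n)),
      L.length ≤ 2 * bandwidth σ - 1 ∧ (∀ τ ∈ L, bandwidth τ ≤ 1) ∧ L.prod = σ := by
  apply inv_list
  obtain ⟨L, h1, h2, h3⟩ := exists_list σ (2 * bandwidth σ - 1)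
  refine ⟨L, h1.le, h2, ?_⟩
  have hb := (bw_le σ (bandwidth σ)).1 le_rfl
  have : σ * L.prod = 1 := perm_eq_one _ (fun i => by
    rw [h3 i]
    refine sorted (ext0_bij σ) _ hw (fun p => ?_) (uniq_ext0 σ h) i
    by_cases hp : p < n
    · rw [ext0_lt σ hp]; exact hb ⟨p, hp⟩
    · rw [ext0_ge σ (by omega)]; omega)
  exact eq_inv_of_mul_eq_one_right this

end OddEven

/-- A settled Strang canonical permutation of bandwidth `w > 0` is a product
of at most `2w - 1` permutations of bandwidth at most 1. -/
theorem stmt_1 (n : ℕ) (σ : Equiv.Perm (Fin n))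
    (hsettled : Settled σ) (hsc : StrangCanonical σ)
    (hw : 0 < bandwidth σ) :
    ∃ L : List (Equiv.Perm (Fin n)),
      L.length ≤ 2 * bandwidth σ - 1 ∧ (∀ τ ∈ L, bandwidth τ ≤ 1) ∧ L.prod = σ := by
  rcases hsettled with h | h
  · exact OddEven.main_row σ h hw
  · apply OddEven.inv_list
    have := OddEven.main_row σ⁻¹ h (by rw [OddEven.bw_inv]; exact hw)
    rwa [OddEven.bw_inv] at this
end

section
/- Let σ be a fixed-point-free settled Strang canonical permutation of {1,…,n} of bandwidth w (necessarily w > 0 since σ has no fixed points). Then σ can be written as a product of at most 2w − 1 permutations of {1,…,n}, each of bandwidth at most 1. -/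
theorem cut_gt {n : ℕ} (σ : Equiv.Perm (Fin n)) (c : Fin n) (hc : IsCutPoint σ c)
    (k : Fin n) (hk : c < k) : c < σ k := by
  by_contra h
  push Not at h
  have himg : (Finset.Iic c).image σ = Finset.Iic c := by
    apply Finset.eq_of_subset_of_card_le
    · intro x hx
      simp only [Finset.mem_image, Finset.mem_Iic] at hx ⊢
      obtain ⟨a, ha, rfl⟩ := hx
      exact hc a ha
    · rw [Finset.card_image_of_injective _ σ.injective]
  have : σ k ∈ (Finset.Iic c).image σ := by rw [himg]; simpa using h
  simp only [Finset.mem_image, Finset.mem_Iic] at this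
  obtain ⟨a, ha, hak⟩ := this
  have := σ.injective hak
  subst this
  exact absurd hk (not_lt.mpr ha)

/-- Two indices are not separated by a cut point. -/
def SecRel {n : ℕ} (σ : Equiv.Perm (Fin n)) (k l : Fin n) : Prop :=
  ∀ c, IsCutPoint σ c → (k ≤ c ↔ l ≤ c)

theorem le_bandwidth {n : ℕ} (σ : Equiv.Perm (Fin n)) (k : Fin n) :
    ((σ k : ℤ) - (k : ℤ)).natAbs ≤ bandwidth σ :=
  Finset.le_sup (f := fun i : Fin n => ((σ i : ℤ) - (i : ℤ)).natAbs) (Finset.mem_univ k)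

theorem bandwidth_inv_le {n : ℕ} (σ : Equiv.Perm (Fin n)) : bandwidth σ⁻¹ ≤ bandwidth σ := by
  apply Finset.sup_le
  intro i _
  have := le_bandwidth σ (σ⁻¹ i)
  rw [show σ (σ⁻¹ i) = i by simp] at this
  omega

theorem prod_of_path {n : ℕ} (π : ℕ → Equiv.Perm (Fin n)) (h0 : π 0 = 1)
    (hs : ∀ t k, ((π (t + 1) k : ℤ) - (π t k : ℤ)).natAbs ≤ 1) (T : ℕ) :
    ∃ L : List (Equiv.Perm (Fin n)),
      L.length ≤ T ∧ (∀ τ ∈ L, bandwidth τ ≤ 1) ∧ L.prod = π T := by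
  induction T with
  | zero => exact ⟨[], by simp, by simp, by simp [h0]⟩
  | succ T ih =>
    obtain ⟨L, h1, h2, h3⟩ := ih
    refine ⟨(π (T + 1) * (π T)⁻¹) :: L, by simpa using h1, ?_, by simp [h3]⟩
    intro τ hτ
    rcases List.mem_cons.mp hτ with rfl | hτ
    · apply Finset.sup_le
      intro i _
      have := hs T ((π T)⁻¹ i)
      simpa using this
    · exact h2 τ hτ

section
variable {n : ℕ} {σ : Equiv.Perm (Fin n)}

theorem exists_split (hfree : ∀ i : Fin n, σ i ≠ i) (k : Fin n) :
    ∃ q m : Fin n, (m : ℕ) = q + 1 ∧ q < σ q ∧ σ m < m ∧ SecRel σ k q := by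
  have hn : 0 < n := k.pos
  rcases lt_or_gt_of_ne (hfree k) with hN | hP
  · -- negative row
    let S := Finset.univ.filter fun m : Fin n => m < k ∧ m < σ m
    have h0 : (⟨0, hn⟩ : Fin n) < σ ⟨0, hn⟩ := by
      have := hfree ⟨0, hn⟩
      rw [Fin.lt_def]
      rw [Ne, Fin.ext_iff] at this
      simp only at this ⊢
      omega
    have h0k : (⟨0, hn⟩ : Fin n) < k := by
      rw [Fin.lt_def] at hN ⊢; simp only; omega
    have hS : S.Nonempty := ⟨⟨0, hn⟩, by simp [S, h0, h0k]⟩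
    have hq := S.max'_mem hS
    have hmax : ∀ x ∈ S, x ≤ S.max' hS := fun x hx => S.le_max' x hx
    generalize S.max' hS = q at hq hmax
    simp only [S, Finset.mem_filter, Finset.mem_univ, true_and] at hq hmax
    have hneg : ∀ x, q < x → x ≤ k → σ x < x := by
      intro x hx hxk
      rcases hxk.eq_or_lt with rfl | hlt
      · exact hN
      · rcases lt_or_gt_of_ne (hfree x) with h | h
        · exact h
        · exact absurd (hmax x ⟨hlt, h⟩) (not_le.mpr hx)
    have hq1 : (q : ℕ) + 1 < n := by have := hq.1; rw [Fin.lt_def] at this; omega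
    refine ⟨q, ⟨q + 1, hq1⟩, rfl, hq.2, hneg _ ?_ ?_, ?_⟩
    · rw [Fin.lt_def]; simp
    · have := hq.1; rw [Fin.lt_def] at this; rw [Fin.le_def]; simp only; omega
    · intro c hc
      constructor
      · intro h; exact hq.1.le.trans h
      · intro h
        by_contra hck
        push Not at hck
        have hc1 : (c : ℕ) + 1 < n := by rw [Fin.lt_def] at hck; omega
        have a := hneg ⟨c + 1, hc1⟩ (by rw [Fin.le_def] at h; rw [Fin.lt_def]; simp only; omega)
          (by rw [Fin.lt_def] at hck; rw [Fin.le_def]; simp only; omega)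
        have b := cut_gt σ c hc ⟨c + 1, hc1⟩ (by rw [Fin.lt_def]; simp)
        rw [Fin.lt_def] at a b
        simp only at a
        omega
  · -- positive row
    let S := Finset.univ.filter fun m : Fin n => k < m ∧ σ m < m
    have hlt : n - 1 < n := by omega
    have h0 : σ ⟨n - 1, hlt⟩ < (⟨n - 1, hlt⟩ : Fin n) := by
      have := hfree ⟨n - 1, hlt⟩
      rw [Fin.lt_def]
      rw [Ne, Fin.ext_iff] at this
      simp only at this ⊢
      omega
    have h0k : k < (⟨n - 1, hlt⟩ : Fin n) := by
      rw [Fin.lt_def] at hP; rw [Fin.lt_def]; simp only; omega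
    have hS : S.Nonempty := ⟨⟨n - 1, hlt⟩, by simp [S, h0, h0k]⟩
    have hm := S.min'_mem hS
    have hmin : ∀ x ∈ S, S.min' hS ≤ x := fun x hx => S.min'_le x hx
    generalize S.min' hS = m at hm hmin
    simp only [S, Finset.mem_filter, Finset.mem_univ, true_and] at hm hmin
    have hpos : ∀ x, k ≤ x → x < m → x < σ x := by
      intro x hx hxk
      rcases hx.eq_or_lt with rfl | hlt
      · exact hP
      · rcases lt_or_gt_of_ne (hfree x) with h | h
        · exact absurd (hmin x ⟨hlt, h⟩) (not_le.mpr hxk)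
        · exact h
    have hkm := hm.1
    rw [Fin.lt_def] at hkm
    have hq1 : (m : ℕ) - 1 < n := by omega
    refine ⟨⟨m - 1, hq1⟩, m, by simp only; omega, hpos _ ?_ ?_, hm.2, ?_⟩
    · rw [Fin.le_def]; simp only; omega
    · rw [Fin.lt_def]; simp only; omega
    · intro c hc
      constructor
      · intro h
        by_contra hck
        push Not at hck
        have a := hpos c h (by rw [Fin.lt_def] at hck ⊢; simp only at hck; omega)
        exact absurd (hc c le_rfl) (not_le.mpr a)
      · intro h
        rw [Fin.le_def] at h ⊢; simp only at h; omega

theorem rel_settled (hrow : RowSettled σ) {i j : Fin n} (hij : i < j) (hr : SecRel σ i j)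
    (hi : σ i < i) (hj : j < σ j) : False :=
  hrow i j hij ⟨hij.le, fun c h1 h2 hc => absurd ((hr c hc).mp h1) (not_le.mpr h2)⟩ ⟨hi, hj⟩

theorem rel_symm {k l : Fin n} (h : SecRel σ k l) : SecRel σ l k := fun c hc => (h c hc).symm

theorem rel_trans {k l m : Fin n} (h : SecRel σ k l) (h' : SecRel σ l m) : SecRel σ k m :=
  fun c hc => (h c hc).trans (h' c hc)

theorem rel_next {q m : Fin n} (hm : (m : ℕ) = q + 1) (hq : q < σ q) : SecRel σ q m := by
  intro c hc
  constructor
  · intro h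
    by_contra h2
    push Not at h2
    have : c = q := by
      rw [Fin.le_def] at h; rw [Fin.lt_def] at h2; apply Fin.ext; omega
    subst this
    exact absurd (hc c le_rfl) (not_le.mpr hq)
  · intro h; rw [Fin.le_def] at h ⊢; omega

theorem exists_b (hfree : ∀ i : Fin n, σ i ≠ i) (hrow : RowSettled σ) :
    ∃ b m : Fin n → Fin n, (∀ k, (m k : ℕ) = b k + 1) ∧ (∀ k, b k < σ (b k)) ∧
      (∀ k, σ (m k) < m k) ∧ (∀ k, SecRel σ k (b k)) ∧ (∀ k l, SecRel σ k l → b k = b l) ∧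
      (∀ k, k < σ k → k ≤ b k) ∧ (∀ k, σ k < k → b k < k) := by
  choose b m hm hP hN hR using exists_split hfree
  have aux : ∀ q q' l : Fin n, (l : ℕ) = q + 1 → q < σ q → σ l < l → q' < σ q' → SecRel σ q q' →
      q' ≤ q := by
    intro q q' l hl hq hl2 hq' hr
    by_contra h
    push Not at h
    have hr2 := rel_trans (rel_symm (rel_next hl hq)) hr
    have hlq : l ≠ q' := by rintro rfl; exact absurd hl2 (not_lt.mpr hq'.le)
    refine rel_settled hrow (i := l) (j := q') ?_ hr2 hl2 hq'
    rw [Ne, Fin.ext_iff] at hlq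
    rw [Fin.lt_def] at h ⊢
    omega
  refine ⟨b, m, hm, hP, hN, hR, ?_, ?_, ?_⟩
  · intro k l hkl
    have hr : SecRel σ (b k) (b l) := rel_trans (rel_symm (hR k)) (rel_trans hkl (hR l))
    exact le_antisymm (aux _ _ _ (hm l) (hP l) (hN l) (hP k) (rel_symm hr))
      (aux _ _ _ (hm k) (hP k) (hN k) (hP l) hr)
  · intro k hk
    exact aux _ _ _ (hm k) (hP k) (hN k) hk (rel_symm (hR k))
  · intro k hk
    by_contra h
    push Not at h
    rcases h.eq_or_lt with h | h
    · have := hP k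
      rw [← h] at this
      exact absurd this (not_lt.mpr hk.le)
    · exact rel_settled hrow h (hR k) hk (hP k)

/-- Positions at time `t`. -/
def posAt (σ : Equiv.Perm (Fin n)) (b : Fin n → Fin n) (t : ℕ) (k : Fin n) : ℤ :=
  if k < σ k then max (k : ℤ) (min (σ k : ℤ) (t + 2 * k - b k))
  else min (k : ℤ) (max (σ k : ℤ) (2 * k - t - b k - 1))

theorem key (hfree : ∀ i : Fin n, σ i ≠ i) (hsc : StrangCanonical σ) {i j b : Fin n}
    (hib : i ≤ b) (hbj : b < j) (hi : i < σ i) (hj : σ j < j)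
    (hPos : ∀ k, i ≤ k → k ≤ b → k < σ k) (hNeg : ∀ k, b < k → k ≤ j → σ k < k)
    (hlt : σ j < σ i) :
    (σ j : ℤ) < i + j - b ∧ (i + j - b : ℤ) ≤ σ i := by
  have hneg : ∀ k, ¬ k < σ k → σ k < k := fun k h =>
    lt_of_le_of_ne (not_lt.mp h) (hfree k)
  have mono1 : ∀ k l, k ≤ l → k < σ k → l < σ l → σ k ≤ σ l := by
    intro k l h h1 h2
    rcases h.eq_or_lt with rfl | h
    · exact le_rfl
    · exact (hsc.1 k l h h1 h2).le
  have mono2 : ∀ k l, k ≤ l → σ k < k → σ l < l → σ k ≤ σ l := by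
    intro k l h h1 h2
    rcases h.eq_or_lt with rfl | h
    · exact le_rfl
    · exact (hsc.2 k l h h1 h2).le
  rw [Fin.le_def] at hib
  have hbj' := hbj
  rw [Fin.lt_def] at hbj'
  constructor
  · have hsub : (Finset.Icc i b ∪ Finset.Ioi j).image σ ⊆ Finset.Ioi (σ j) := by
      intro x hx
      simp only [Finset.mem_image, Finset.mem_union, Finset.mem_Icc, Finset.mem_Ioi] at hx ⊢
      obtain ⟨k, hk, rfl⟩ := hx
      rcases hk with ⟨h1, h2⟩ | h
      · exact hlt.trans_le (mono1 i k h1 hi (hPos k h1 h2))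
      · by_cases hk : k < σ k
        · exact hj.trans (h.trans hk)
        · exact hsc.2 j k h hj (hneg k hk)
    have hc := Finset.card_le_card hsub
    rw [Finset.card_image_of_injective _ σ.injective, Finset.card_union_of_disjoint,
      Fin.card_Icc, Fin.card_Ioi, Fin.card_Ioi] at hc
    · omega
    · rw [Finset.disjoint_left]
      intro x hx hx'
      simp only [Finset.mem_Icc, Finset.mem_Ioi] at hx hx'
      exact absurd (hx.2.trans_lt hbj) (not_lt.mpr hx'.le)
  · have hsub : (Finset.Iio i ∪ Finset.Ioc b j).image σ ⊆ Finset.Iio (σ i) := by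
      intro x hx
      simp only [Finset.mem_image, Finset.mem_union, Finset.mem_Ioc, Finset.mem_Iio] at hx ⊢
      obtain ⟨k, hk, rfl⟩ := hx
      rcases hk with h | ⟨h1, h2⟩
      · by_cases hk : k < σ k
        · exact hsc.1 k i h hk hi
        · exact (hneg k hk).trans (h.trans hi)
      · exact (mono2 k j h2 (hNeg k h1 h2) hj).trans_lt hlt
    have hc := Finset.card_le_card hsub
    rw [Finset.card_image_of_injective _ σ.injective, Finset.card_union_of_disjoint,
      Fin.card_Iio, Fin.card_Ioc, Fin.card_Iio] at hc
    · omega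
    · rw [Finset.disjoint_left]
      intro x hx hx'
      simp only [Finset.mem_Ioc, Finset.mem_Iio] at hx hx'
      have h1 := hx'.1
      rw [Fin.lt_def] at hx h1
      omega

theorem stmt_row (hfree : ∀ i : Fin n, σ i ≠ i) (hrow : RowSettled σ) (hsc : StrangCanonical σ) :
    ∃ L : List (Equiv.Perm (Fin n)),
      L.length ≤ 2 * bandwidth σ - 1 ∧ (∀ τ ∈ L, bandwidth τ ≤ 1) ∧ L.prod = σ := by
  obtain ⟨b, m, hm, hbP, hmN, hbR, hbeq, hPle, hNlt⟩ := exists_b hfree hrow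
  have hneg : ∀ k, ¬ k < σ k → σ k < k := fun k h =>
    lt_of_le_of_ne (not_lt.mp h) (hfree k)
  have hNotP : ∀ k, σ k < k → ¬ k < σ k := fun k h => not_lt.mpr h.le
  have relmid : ∀ k l x, k ≤ x → x ≤ l → SecRel σ k l → SecRel σ x l := by
    intro k l x h1 h2 hr c hc
    constructor
    · intro h; exact (hr c hc).mp (h1.trans h)
    · intro h; exact h2.trans h
  have hPos : ∀ i, i < σ i → ∀ k, i ≤ k → k ≤ b i → k < σ k := by
    intro i hi k h1 h2
    by_contra h
    have h3 := hNlt k (hneg k h)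
    rw [hbeq k (b i) (relmid i (b i) k h1 h2 (hbR i)), ← hbeq i (b i) (hbR i)] at h3
    exact absurd h3 (not_lt.mpr h2)
  have hNeg : ∀ j, σ j < j → ∀ k, b j < k → k ≤ j → σ k < k := by
    intro j hj k h1 h2
    by_contra h
    have h4 : k < σ k := lt_of_le_of_ne (not_lt.mp h) (hfree k).symm
    have h3 := hPle k h4
    rw [hbeq k j (relmid (b j) j k h1.le h2 (rel_symm (hbR j)))] at h3
    exact absurd h1 (not_lt.mpr h3)
  -- bounds on positions
  have hbd : ∀ t k, (k ≤ σ k → (k : ℤ) ≤ posAt σ b t k ∧ posAt σ b t k ≤ σ k) ∧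
      (σ k ≤ k → (σ k : ℤ) ≤ posAt σ b t k ∧ posAt σ b t k ≤ k) := by
    intro t k
    unfold posAt
    simp only [Fin.lt_def, Fin.le_def]
    split_ifs <;> omega
  have hcutle : ∀ t k c, IsCutPoint σ c → k ≤ c → posAt σ b t k ≤ c := by
    intro t k c hc hk
    have h1 := hc k hk
    have h2 := hbd t k
    simp only [Fin.le_def] at *
    omega
  have hcutgt : ∀ t k c, IsCutPoint σ c → c < k → (c : ℤ) < posAt σ b t k := by
    intro t k c hc hk
    have h1 := cut_gt σ c hc k hk
    have h2 := hbd t k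
    simp only [Fin.le_def, Fin.lt_def] at *
    omega
  -- injectivity, positive versus negative row in the same section
  have hPN : ∀ t i j, i < σ i → σ j < j → SecRel σ i j → posAt σ b t i ≠ posAt σ b t j := by
    intro t i j hi hj hr
    have hb := hbeq i j hr
    have h1 := hPle i hi
    have h2 := hNlt j hj
    have hne : σ i ≠ σ j := by
      intro h
      have := σ.injective h
      subst this
      exact hNotP i hj hi
    have hk := key hfree hsc h1 (hb ▸ h2) hi hj (hPos i hi) (fun k h h' => hNeg j hj k (hb ▸ h) h')
    unfold posAt
    rw [if_pos hi, if_neg (hNotP j hj)]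
    rw [← hb] at h2 ⊢
    rw [Ne, Fin.ext_iff] at hne
    simp only [Fin.le_def, Fin.lt_def] at *
    omega
  have hinj : ∀ t k l, k < l → posAt σ b t k ≠ posAt σ b t l := by
    intro t k l hkl
    by_cases hr : SecRel σ k l
    · by_cases hk : k < σ k <;> by_cases hl : l < σ l
      · have := hsc.1 k l hkl hk hl
        have hb := hbeq k l hr
        unfold posAt
        rw [if_pos hk, if_pos hl, hb]
        simp only [Fin.le_def, Fin.lt_def] at *
        omega
      · exact hPN t k l hk (hneg l hl) hr
      · exact (hPN t l k hl (hneg k hk) (rel_symm hr)).symm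
      · have := hsc.2 k l hkl (hneg k hk) (hneg l hl)
        have hb := hbeq k l hr
        unfold posAt
        rw [if_neg hk, if_neg hl, hb]
        simp only [Fin.le_def, Fin.lt_def] at *
        omega
    · unfold SecRel at hr
      push Not at hr
      obtain ⟨c, hc, h⟩ := hr
      have hkc : k ≤ c ∧ c < l := by
        rcases h with h | h
        · exact h
        · exact absurd (hkl.le.trans h.2) (not_le.mpr h.1)
      have h1 := hcutle t k c hc hkc.1
      have h2 := hcutgt t l c hc hkc.2
      omega
  have hex : ∀ t, ∃ π : Equiv.Perm (Fin n), ∀ k, (π k : ℤ) = posAt σ b t k := by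
    intro t
    have hr : ∀ k, ∃ x : Fin n, (x : ℤ) = posAt σ b t k := by
      intro k
      have h2 := hbd t k
      have h3 := k.isLt
      have h4 := (σ k).isLt
      simp only [Fin.le_def] at h2
      exact ⟨⟨(posAt σ b t k).toNat, by omega⟩, by simp only; omega⟩
    choose f hf using hr
    have hfi : Function.Injective f := by
      intro k l hkl
      by_contra hne
      have e : posAt σ b t k = posAt σ b t l := by rw [← hf, ← hf, hkl]
      rcases lt_or_gt_of_ne hne with h | h
      · exact hinj t k l h e
      · exact hinj t l k h e.symm
    exact ⟨Equiv.ofBijective f (Finite.injective_iff_bijective.mp hfi), hf⟩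
  choose π hπ using hex
  have h0 : π 0 = 1 := by
    ext k
    have h := hπ 0 k
    have h1 := hPle k
    have h2 := hNlt k
    have h3 := hneg k
    unfold posAt at h
    simp only [Equiv.Perm.coe_one, id]
    simp only [Fin.le_def, Fin.lt_def] at *
    split_ifs at h <;> omega
  have hs : ∀ t k, ((π (t + 1) k : ℤ) - (π t k : ℤ)).natAbs ≤ 1 := by
    intro t k
    rw [hπ, hπ]
    unfold posAt
    push_cast
    split_ifs <;> omega
  have hT : π (2 * bandwidth σ - 1) = σ := by
    ext k
    have h := hπ (2 * bandwidth σ - 1) k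
    have hw := le_bandwidth σ k
    have h3 := hneg k
    by_cases hk : k < σ k
    · have h1 := hPle k hk
      have h4 : σ (m k) ≤ k := by
        by_contra hcon
        push Not at hcon
        -- then k is a cut point
        have hcut : ∀ x, k < x → k < σ x := by
          intro x hx
          by_cases hxP : x < σ x
          · exact hx.trans hxP
          · have hxN := hneg x hxP
            have hbx : m k ≤ x := by
              by_contra hlt
              push Not at hlt
              have hmk := hm k
              refine hxP (hPos k hk x hx.le ?_)
              rw [Fin.lt_def] at hlt
              rw [Fin.le_def]
              omega
            rcases hbx.eq_or_lt with e | e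
            · rw [← e]; exact hcon
            · exact hcon.trans (hsc.2 _ _ e (hmN k) hxN)
        have himg : (Finset.Ioi k).image σ = Finset.Ioi k := by
          apply Finset.eq_of_subset_of_card_le
          · intro x hx
            simp only [Finset.mem_image, Finset.mem_Ioi] at hx ⊢
            obtain ⟨a, ha, rfl⟩ := hx
            exact hcut a ha
          · rw [Finset.card_image_of_injective _ σ.injective]
        have : σ k ∈ (Finset.Ioi k).image σ := by rw [himg]; simpa using hk
        simp only [Finset.mem_image, Finset.mem_Ioi] at this
        obtain ⟨a, ha, hak⟩ := this
        have := σ.injective hak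
        subst this
        exact lt_irrefl _ ha
      have hw2 := le_bandwidth σ (m k)
      have hmk := hm k
      unfold posAt at h
      rw [if_pos hk] at h
      simp only [Fin.le_def, Fin.lt_def] at *
      omega
    · have hkN := hneg k hk
      have h1 := hNlt k hkN
      have h4 : k ≤ σ (b k) := by
        by_contra hcon
        push Not at hcon
        have hcut : ∀ x, x < k → σ x < k := by
          intro x hx
          by_cases hxP : x < σ x
          · have hbx : x ≤ b k := by
              by_contra hlt
              push Not at hlt
              exact hNotP x (hNeg k hkN x hlt hx.le) hxP
            rcases hbx.eq_or_lt with e | e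
            · rw [e]; exact hcon
            · exact (hsc.1 _ _ e hxP (hbP k)).trans hcon
          · exact (hneg x hxP).trans hx
        have himg : (Finset.Iio k).image σ = Finset.Iio k := by
          apply Finset.eq_of_subset_of_card_le
          · intro x hx
            simp only [Finset.mem_image, Finset.mem_Iio] at hx ⊢
            obtain ⟨a, ha, rfl⟩ := hx
            exact hcut a ha
          · rw [Finset.card_image_of_injective _ σ.injective]
        have : σ k ∈ (Finset.Iio k).image σ := by rw [himg]; simpa using hkN
        simp only [Finset.mem_image, Finset.mem_Iio] at this
        obtain ⟨a, ha, hak⟩ := this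
        have := σ.injective hak
        subst this
        exact lt_irrefl _ ha
      have hw2 := le_bandwidth σ (b k)
      unfold posAt at h
      rw [if_neg hk] at h
      simp only [Fin.le_def, Fin.lt_def] at *
      omega
  have := prod_of_path π h0 hs (2 * bandwidth σ - 1)
  rwa [hT] at this

end

/-- A fixed-point-free settled Strang canonical permutation of bandwidth `w`
is a product of at most `2w - 1` permutations of bandwidth at most 1. -/
theorem stmt_2 (n : ℕ) (σ : Equiv.Perm (Fin n))
    (hfree : ∀ i : Fin n, σ i ≠ i)
    (hsettled : Settled σ) (hsc : StrangCanonical σ) :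
    ∃ L : List (Equiv.Perm (Fin n)),
      L.length ≤ 2 * bandwidth σ - 1 ∧ (∀ τ ∈ L, bandwidth τ ≤ 1) ∧ L.prod = σ := by
  rcases hsettled with h | h
  · exact stmt_row hfree h hsc
  · have hf : ∀ i, σ⁻¹ i ≠ i := by
      intro i hi
      apply hfree i
      conv_lhs => rw [← hi]
      simp
    have hs : StrangCanonical σ⁻¹ := by
      constructor
      · intro i j hij hi hj
        by_contra hcon
        have hne : σ⁻¹ i ≠ σ⁻¹ j := fun e => hij.ne (σ⁻¹.injective e)
        have hlt : σ⁻¹ j < σ⁻¹ i := lt_of_le_of_ne (not_lt.mp hcon) hne.symm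
        have := hsc.2 _ _ hlt (by simpa using hj) (by simpa using hi)
        simp at this
        exact absurd hij (not_lt.mpr this.le)
      · intro i j hij hi hj
        by_contra hcon
        have hne : σ⁻¹ i ≠ σ⁻¹ j := fun e => hij.ne (σ⁻¹.injective e)
        have hlt : σ⁻¹ j < σ⁻¹ i := lt_of_le_of_ne (not_lt.mp hcon) hne.symm
        have := hsc.1 _ _ hlt (by simpa using hj) (by simpa using hi)
        simp at this
        exact absurd hij (not_lt.mpr this.le)
    obtain ⟨L, h1, h2, h3⟩ := stmt_row hf h hs
    refine ⟨(L.map (·⁻¹)).reverse, ?_, ?_, ?_⟩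
    · have := bandwidth_inv_le σ
      simp only [List.length_reverse, List.length_map]
      omega
    · intro τ hτ
      simp only [List.mem_reverse, List.mem_map] at hτ
      obtain ⟨ρ, hρ, rfl⟩ := hτ
      exact (bandwidth_inv_le ρ).trans (h2 ρ hρ)
    · rw [← List.prod_inv_reverse, h3, inv_inv]
end

section
/- Let σ be a Strang canonical permutation of {1,…,n} such that every fixed point of σ lies in a trivial section. Then iterating the reduction map starting from σ reaches the identity permutation after finitely many steps; consequently σ is the product of the corresponding reducing permutations, each of which has bandwidth at most 1. -/
/-- The pairs of adjacent positions swapped by the reducing permutation. -/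
def SwapPair {n : ℕ} (σ : Equiv.Perm (Fin n)) (i j : Fin n) : Prop :=
  (j : ℕ) = (i : ℕ) + 1 ∧ i < σ i ∧ σ j < j

lemma reducing_aux {n : ℕ} (σ : Equiv.Perm (Fin n)) (l : List (Fin n)) (hl : l.Nodup) :
    (∀ i j, SwapPair σ i j → i ∈ l →
      ((l.filterMap fun i : Fin n =>
        if h : (i : ℕ) + 1 < n then
          let j : Fin n := ⟨(i : ℕ) + 1, h⟩
          if i < σ i ∧ σ j < j then some (Equiv.swap i j) else none
        else none).prod i = j ∧
      (l.filterMap fun i : Fin n =>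
        if h : (i : ℕ) + 1 < n then
          let j : Fin n := ⟨(i : ℕ) + 1, h⟩
          if i < σ i ∧ σ j < j then some (Equiv.swap i j) else none
        else none).prod j = i)) ∧
    (∀ x, (∀ i j, SwapPair σ i j → i ∈ l → x ≠ i ∧ x ≠ j) →
      (l.filterMap fun i : Fin n =>
        if h : (i : ℕ) + 1 < n then
          let j : Fin n := ⟨(i : ℕ) + 1, h⟩
          if i < σ i ∧ σ j < j then some (Equiv.swap i j) else none
        else none).prod x = x) := by
  set f : Fin n → Option (Equiv.Perm (Fin n)) := fun i : Fin n =>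
        if h : (i : ℕ) + 1 < n then
          let j : Fin n := ⟨(i : ℕ) + 1, h⟩
          if i < σ i ∧ σ j < j then some (Equiv.swap i j) else none
        else none with hf
  have hsome : ∀ i j, SwapPair σ i j → f i = some (Equiv.swap i j) := by
    intro i j hij
    obtain ⟨h1, h2, h3⟩ := hij
    have hlt : (i : ℕ) + 1 < n := by have := j.2; omega
    have hj : j = ⟨(i : ℕ) + 1, hlt⟩ := Fin.ext h1
    subst hj
    simp only [hf, dif_pos hlt]
    rw [if_pos ⟨h2, h3⟩]
  have hnone : ∀ i, (∀ j, ¬ SwapPair σ i j) → f i = none := by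
    intro i hi
    by_cases hlt : (i : ℕ) + 1 < n
    · simp only [hf, dif_pos hlt]
      rw [if_neg]
      rintro ⟨h2, h3⟩
      exact hi ⟨(i : ℕ) + 1, hlt⟩ ⟨rfl, h2, h3⟩
    · simp only [hf, dif_neg hlt]
  clear_value f
  induction l with
  | nil => simp
  | cons a l ih =>
    obtain ⟨hal, hl'⟩ := List.nodup_cons.1 hl
    obtain ⟨ih1, ih2⟩ := ih hl'
    by_cases ha : ∃ b, SwapPair σ a b
    · obtain ⟨b, hab⟩ := ha
      rw [List.filterMap_cons_some (hsome a b hab), List.prod_cons]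
      -- `a` and `b` are untouched by the tail
      have hda : ∀ i j, SwapPair σ i j → i ∈ l → (a ≠ i ∧ a ≠ j) ∧ (b ≠ i ∧ b ≠ j) := by
        intro i j hij hil
        obtain ⟨h1, h2, h3⟩ := hij
        obtain ⟨h4, h5, h6⟩ := hab
        refine ⟨⟨?_, ?_⟩, ?_, ?_⟩
        · rintro rfl; exact hal hil
        · rintro rfl; exact absurd h5 (not_lt.2 h3.le)
        · rintro rfl; exact absurd h6 (not_lt.2 h2.le)
        · rintro rfl
          have : a = i := Fin.ext (by omega)
          subst this; exact hal hil
      have hpa := ih2 a (fun i j hij hil => (hda i j hij hil).1)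
      have hpb := ih2 b (fun i j hij hil => (hda i j hij hil).2)
      refine ⟨?_, ?_⟩
      · intro i j hij hil
        rcases List.mem_cons.1 hil with rfl | hil
        · have : j = b := Fin.ext (by rw [hij.1, hab.1])
          subst this
          simp [hpa, hpb]
        · obtain ⟨hi, hj⟩ := ih1 i j hij hil
          obtain ⟨⟨h1, h2⟩, h3, h4⟩ := hda i j hij hil
          simp only [Equiv.Perm.mul_apply, hi, hj]
          exact ⟨Equiv.swap_apply_of_ne_of_ne h2.symm h4.symm,
            Equiv.swap_apply_of_ne_of_ne h1.symm h3.symm⟩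
      · intro x hx
        have h1 := ih2 x (fun i j hij hil => hx i j hij (List.mem_cons_of_mem _ hil))
        have h2 := hx a b hab List.mem_cons_self
        rw [Equiv.Perm.mul_apply, h1]
        exact Equiv.swap_apply_of_ne_of_ne h2.1 h2.2
    · have ha' : ∀ j, ¬ SwapPair σ a j := fun j hj => ha ⟨j, hj⟩
      rw [List.filterMap_cons_none (hnone a ha')]
      refine ⟨?_, ?_⟩
      · intro i j hij hil
        rcases List.mem_cons.1 hil with rfl | hil
        · exact absurd hij (ha' j)
        · exact ih1 i j hij hil
      · intro x hx
        exact ih2 x (fun i j hij hil => hx i j hij (List.mem_cons_of_mem _ hil))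

lemma reducing_swap {n : ℕ} (σ : Equiv.Perm (Fin n)) (i j : Fin n) (h : SwapPair σ i j) :
    reducingPerm σ i = j ∧ reducingPerm σ j = i :=
  (reducing_aux σ (List.finRange n) (List.nodup_finRange n)).1 i j h (List.mem_finRange i)

lemma reducing_cases {n : ℕ} (σ : Equiv.Perm (Fin n)) (x : Fin n) :
    SwapPair σ x (reducingPerm σ x) ∨ SwapPair σ (reducingPerm σ x) x ∨
      reducingPerm σ x = x := by
  by_cases h1 : ∃ y, SwapPair σ x y
  · obtain ⟨y, hy⟩ := h1
    left; rw [(reducing_swap σ x y hy).1]; exact hy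
  by_cases h2 : ∃ y, SwapPair σ y x
  · obtain ⟨y, hy⟩ := h2
    right; left; rw [(reducing_swap σ y x hy).2]; exact hy
  right; right
  refine (reducing_aux σ (List.finRange n) (List.nodup_finRange n)).2 x ?_
  intro i j hij _
  constructor
  · rintro rfl; exact h1 ⟨j, hij⟩
  · rintro rfl; exact h2 ⟨i, hij⟩

lemma reducing_invol {n : ℕ} (σ : Equiv.Perm (Fin n)) :
    reducingPerm σ * reducingPerm σ = 1 := by
  ext x
  rw [Equiv.Perm.mul_apply, Equiv.Perm.one_apply]
  rcases reducing_cases σ x with h | h | h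
  · rw [(reducing_swap σ _ _ h).2]
  · rw [(reducing_swap σ _ _ h).1]
  · rw [h, h]

lemma reducing_bandwidth {n : ℕ} (σ : Equiv.Perm (Fin n)) :
    bandwidth (reducingPerm σ) ≤ 1 := by
  refine Finset.sup_le fun x _ => ?_
  rcases reducing_cases σ x with h | h | h
  · have := h.1; omega
  · have := h.1; omega
  · rw [h]; simp

/-- The invariant on fixed points. -/
def FixSplit {n : ℕ} (σ : Equiv.Perm (Fin n)) : Prop :=
  ∀ m : Fin n, σ m = m → ∀ j, j < m → σ j < m

lemma split_of_upper {n : ℕ} (σ : Equiv.Perm (Fin n)) (m : Fin n) (hm : σ m = m)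
    (h : ∀ j, m < j → m < σ j) : ∀ j, j < m → σ j < m := by
  intro j hj
  have hmap : Finset.image σ (Finset.Ioi m) = Finset.Ioi m := by
    apply Finset.eq_of_subset_of_card_le
    · intro y hy
      obtain ⟨x, hx, rfl⟩ := Finset.mem_image.1 hy
      exact Finset.mem_Ioi.2 (h x (Finset.mem_Ioi.1 hx))
    · rw [Finset.card_image_of_injective _ σ.injective]
  by_contra hc
  rcases (not_lt.1 hc).eq_or_lt with h1 | h1
  · have := σ.injective (hm.trans h1)
    exact hj.ne this.symm
  · have : σ j ∈ Finset.image σ (Finset.Ioi m) := by rw [hmap]; exact Finset.mem_Ioi.2 h1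
    obtain ⟨x, hx, hxj⟩ := Finset.mem_image.1 this
    have := σ.injective hxj
    subst this
    exact absurd (Finset.mem_Ioi.1 hx) (not_lt.2 hj.le)

/-- Positive positions after reduction come from positive positions weakly to the left. -/
lemma pos_red {n : ℕ} (σ : Equiv.Perm (Fin n)) (i : Fin n) (h : i < σ (reducingPerm σ i)) :
    ((reducingPerm σ i : ℕ) = i ∨ (reducingPerm σ i : ℕ) + 1 = i) ∧
      reducingPerm σ i < σ (reducingPerm σ i) := by
  rcases reducing_cases σ i with h1 | h1 | h1
  · obtain ⟨a, b, c⟩ := h1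
    rw [Fin.lt_def] at *
    omega
  · exact ⟨Or.inr h1.1.symm, h1.2.1⟩
  · exact ⟨Or.inl (by rw [h1]), by rw [h1] at h ⊢; exact h⟩

lemma neg_red {n : ℕ} (σ : Equiv.Perm (Fin n)) (i : Fin n) (h : σ (reducingPerm σ i) < i) :
    ((reducingPerm σ i : ℕ) = i ∨ (reducingPerm σ i : ℕ) = i + 1) ∧
      σ (reducingPerm σ i) < reducingPerm σ i := by
  rcases reducing_cases σ i with h1 | h1 | h1
  · exact ⟨Or.inr h1.1, h1.2.2⟩
  · obtain ⟨a, b, c⟩ := h1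
    rw [Fin.lt_def] at *
    omega
  · exact ⟨Or.inl (by rw [h1]), by rw [h1] at h ⊢; exact h⟩

lemma red_ne {n : ℕ} (σ : Equiv.Perm (Fin n)) {i j : Fin n} (h : i < j) :
    (reducingPerm σ i : ℕ) ≠ reducingPerm σ j := fun he =>
  h.ne ((reducingPerm σ).injective (Fin.ext he))

lemma upper_red {n : ℕ} (σ : Equiv.Perm (Fin n)) (h : UpperCanonical σ) :
    UpperCanonical (reduction σ) := by
  intro i j hij hi hj
  simp only [reduction, Equiv.Perm.mul_apply] at *
  obtain ⟨a, b⟩ := pos_red σ i hi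
  obtain ⟨c, d⟩ := pos_red σ j hj
  refine h _ _ ?_ b d
  have := red_ne σ hij
  rw [Fin.lt_def] at *
  omega

lemma lower_red {n : ℕ} (σ : Equiv.Perm (Fin n)) (h : LowerCanonical σ) :
    LowerCanonical (reduction σ) := by
  intro i j hij hi hj
  simp only [reduction, Equiv.Perm.mul_apply] at *
  obtain ⟨a, b⟩ := neg_red σ i hi
  obtain ⟨c, d⟩ := neg_red σ j hj
  refine h _ _ ?_ b d
  have := red_ne σ hij
  rw [Fin.lt_def] at *
  omega

lemma fix_red {n : ℕ} (σ : Equiv.Perm (Fin n)) (hu : UpperCanonical σ) (hl : LowerCanonical σ)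
    (h : FixSplit σ) : FixSplit (reduction σ) := by
  intro m hm
  have hm' : σ (reducingPerm σ m) = m := hm
  rcases reducing_cases σ m with h1 | h1 | h1
  · refine split_of_upper _ m hm ?_
    intro j hj
    change m < σ (reducingPerm σ j)
    by_contra hc
    have hc' := not_lt.1 hc
    obtain ⟨a, b⟩ := neg_red σ j (lt_of_le_of_lt hc' hj)
    have hne := red_ne σ hj
    have h2 := hl (reducingPerm σ m) (reducingPerm σ j)
      (by have := h1.1; rw [Fin.lt_def] at *; omega) h1.2.2 b
    rw [hm'] at h2
    exact hc h2
  · intro j hj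
    change σ (reducingPerm σ j) < m
    by_contra hc
    have hc' := not_lt.1 hc
    obtain ⟨a, b⟩ := pos_red σ j (lt_of_lt_of_le hj hc')
    have hne := red_ne σ hj
    have h2 := hu (reducingPerm σ j) (reducingPerm σ m)
      (by have := h1.1; rw [Fin.lt_def] at *; omega) b h1.2.1
    rw [hm'] at h2
    exact hc h2
  · intro j hj
    change σ (reducingPerm σ j) < m
    rw [h1] at hm'
    apply h m hm'
    have hne := red_ne σ hj
    rw [h1] at hne
    rcases reducing_cases σ j with h2 | h2 | h2
    · have := h2.1; rw [Fin.lt_def] at *; omega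
    · have := h2.1; rw [Fin.lt_def] at *; omega
    · rw [h2]; exact hj

/-- Total displacement. -/
def displ {n : ℕ} (σ : Equiv.Perm (Fin n)) : ℕ :=
  ∑ i : Fin n, ((σ i : ℤ) - (i : ℤ)).natAbs

lemma exists_pair {n : ℕ} (σ : Equiv.Perm (Fin n)) (h : FixSplit σ) (hne : σ ≠ 1) :
    ∃ i j, SwapPair σ i j := by
  by_contra hno
  push Not at hno
  -- positivity propagates to the right
  have hstep : ∀ i : Fin n, i < σ i → ∃ j : Fin n, (j : ℕ) = i + 1 ∧ j < σ j := by
    intro i hi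
    have hlt : (i : ℕ) + 1 < n := by have := (σ i).2; rw [Fin.lt_def] at hi; omega
    refine ⟨⟨i + 1, hlt⟩, rfl, ?_⟩
    rcases lt_trichotomy (σ ⟨i + 1, hlt⟩) ⟨i + 1, hlt⟩ with h1 | h1 | h1
    · exact absurd ⟨rfl, hi, h1⟩ (hno i ⟨i + 1, hlt⟩)
    · have := h _ h1 i (by rw [Fin.lt_def]; simp)
      rw [Fin.lt_def] at *
      simp only at this
      omega
    · exact h1
  have hnopos : ∀ k : ℕ, ∀ i : Fin n, n - i = k → ¬ i < σ i := by
    intro k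
    induction k with
    | zero => intro i hi; have := i.2; omega
    | succ k ih =>
      intro i hi hp
      obtain ⟨j, hj, hj'⟩ := hstep i hp
      exact ih j (by omega) hj'
  have hle : ∀ i, σ i ≤ i := fun i => not_lt.1 (hnopos _ i rfl)
  apply hne
  have hsum : ∑ i, ((σ i : Fin n) : ℕ) = ∑ i : Fin n, (i : ℕ) :=
    Equiv.sum_comp σ (fun i : Fin n => (i : ℕ))
  have := (Finset.sum_eq_sum_iff_of_le (s := Finset.univ) (f := fun i : Fin n => ((σ i : Fin n) : ℕ))
    (g := fun i : Fin n => (i : ℕ)) (fun i _ => hle i)).1 hsum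
  ext i
  exact this i (Finset.mem_univ i)

lemma displ_red {n : ℕ} (σ : Equiv.Perm (Fin n)) (h : FixSplit σ) (hne : σ ≠ 1) :
    displ (reduction σ) < displ σ := by
  obtain ⟨a, b, hab⟩ := exists_pair σ h hne
  have e : displ σ = ∑ i : Fin n,
      ((σ (reducingPerm σ i) : ℤ) - (reducingPerm σ i : ℤ)).natAbs :=
    (Equiv.sum_comp (reducingPerm σ) (fun i : Fin n => ((σ i : ℤ) - (i : ℤ)).natAbs)).symm
  rw [e]
  unfold displ
  apply Finset.sum_lt_sum
  · intro i _
    simp only [reduction, Equiv.Perm.mul_apply]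
    rcases reducing_cases σ i with h1 | h1 | h1
    · obtain ⟨x, y, z⟩ := h1; rw [Fin.lt_def] at *; omega
    · obtain ⟨x, y, z⟩ := h1; rw [Fin.lt_def] at *; omega
    · rw [h1]
  · refine ⟨a, Finset.mem_univ _, ?_⟩
    simp only [reduction, Equiv.Perm.mul_apply]
    rw [(reducing_swap σ a b hab).1]
    obtain ⟨x, y, z⟩ := hab; rw [Fin.lt_def] at *; omega

lemma reach {n : ℕ} (d : ℕ) : ∀ σ : Equiv.Perm (Fin n), displ σ ≤ d → UpperCanonical σ →
    LowerCanonical σ → FixSplit σ → ∃ q : ℕ, reduction^[q] σ = 1 := by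
  induction d with
  | zero =>
    intro σ hd _ _ hf
    refine ⟨0, ?_⟩
    by_contra hne
    have := displ_red σ hf hne
    omega
  | succ d ih =>
    intro σ hd hu hl hf
    by_cases hne : σ = 1
    · exact ⟨0, hne⟩
    · have := displ_red σ hf hne
      obtain ⟨q, hq⟩ := ih (reduction σ) (by omega) (upper_red σ hu) (lower_red σ hl)
        (fix_red σ hu hl hf)
      exact ⟨q + 1, hq⟩

lemma prod_formula {n : ℕ} (σ : Equiv.Perm (Fin n)) (q : ℕ) :
    σ = reduction^[q] σ *
      (((List.range q).map fun k => reducingPerm (reduction^[k] σ)).reverse).prod := by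
  induction q with
  | zero => simp
  | succ q ih =>
    rw [List.range_succ, List.map_append, List.reverse_append, List.prod_append,
      Function.iterate_succ_apply']
    simp only [List.map_cons, List.map_nil, List.reverse_singleton, List.prod_singleton]
    rw [← mul_assoc]
    have : reduction (reduction^[q] σ) * reducingPerm (reduction^[q] σ) = reduction^[q] σ := by
      rw [reduction, mul_assoc, reducing_invol, mul_one]
    rw [this]
    exact ih

/-- If `σ` is Strang canonical and every fixed point of `σ` lies in a trivial
section, then iterating the reduction map reaches the identity; consequently `σ` is the
product of the corresponding reducing permutations, each of bandwidth at most 1. -/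
theorem stmt_5 (n : ℕ) (σ : Equiv.Perm (Fin n)) (hsc : StrangCanonical σ)
    (hfix : ∀ m : Fin n, σ m = m → ∀ j : Fin n, InSameSection σ m j → j = m) :
    ∃ q : ℕ, reduction^[q] σ = 1 ∧
      σ = (((List.range q).map fun k => reducingPerm (reduction^[k] σ)).reverse).prod ∧
      ∀ k < q, bandwidth (reducingPerm (reduction^[k] σ)) ≤ 1 := by
  have hf : FixSplit σ := by
    intro m hm j hj
    have hm0 : 0 < (m : ℕ) := by rw [Fin.lt_def] at hj; omega
    have hpn : (m : ℕ) - 1 < n := by have := m.2; omega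
    have hns : ¬ SameSection σ ⟨(m : ℕ) - 1, hpn⟩ m := by
      intro hs
      have := congrArg Fin.val (hfix m hm _ (Or.inr hs))
      simp only at this
      omega
    unfold SameSection at hns
    push Not at hns
    obtain ⟨c, hc1, hc2, hc3⟩ := hns (by rw [Fin.le_def]; simp)
    have := hc3 j (by rw [Fin.le_def] at *; rw [Fin.lt_def] at *; simp only at hc1; omega)
    exact lt_of_le_of_lt this hc2
  obtain ⟨q, hq⟩ := reach _ σ le_rfl hsc.1 hsc.2 hf
  refine ⟨q, hq, ?_, fun k _ => reducing_bandwidth _⟩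
  have := prod_formula σ q
  rw [hq, one_mul] at this
  exact this
end

section
/- Let σ be a Strang canonical permutation of {1,…,n}. Then the reduction of σ is Strang canonical. Moreover, if every fixed point of σ lies in a trivial section, then every fixed point of the reduction of σ lies in a trivial section. -/
/-- `(i, j)` is one of the swapped pairs. -/
def RedPair {n : ℕ} (σ : Equiv.Perm (Fin n)) (i j : Fin n) : Prop :=
  (j : ℕ) = i + 1 ∧ i < σ i ∧ σ j < j

theorem redPair_list {n : ℕ} (σ : Equiv.Perm (Fin n)) (l : List (Fin n)) (hl : l.Nodup) :
    ∀ r : Equiv.Perm (Fin n), r = (l.filterMap fun i : Fin n =>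
      if h : (i : ℕ) + 1 < n then
        let j : Fin n := ⟨(i : ℕ) + 1, h⟩
        if i < σ i ∧ σ j < j then some (Equiv.swap i j) else none
      else none).prod →
    ∀ x, (∀ j, x ∈ l → RedPair σ x j → r x = j) ∧ (∀ i ∈ l, RedPair σ i x → r x = i) ∧
      ((∀ i ∈ l, ∀ j, RedPair σ i j → x ≠ i ∧ x ≠ j) → r x = x) := by
  induction l with
  | nil => intro r hr x; simp at hr; subst hr; simp
  | cons a l ih =>
    intro r hr x
    rw [List.nodup_cons] at hl
    obtain ⟨ha, hl⟩ := hl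
    obtain ⟨h1, h2, h3⟩ := ih hl _ rfl x
    by_cases hp : ∃ b, RedPair σ a b
    · obtain ⟨b, hb⟩ := hp
      have hab : (a : ℕ) + 1 < n := by have := hb.1; omega
      have hbe : (⟨(a : ℕ) + 1, hab⟩ : Fin n) = b := by ext; exact hb.1.symm
      rw [List.filterMap_cons_some (b := Equiv.swap a b)] at hr
      · rw [List.prod_cons] at hr
        generalize (List.filterMap (β := Equiv.Perm (Fin n)) _ l).prod = s at *
        subst hr
        have key : ∀ i j, RedPair σ i j → i ≠ a → i ≠ b ∧ j ≠ a ∧ j ≠ b := by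
          intro i j hij hne
          obtain ⟨e1, e2, e3⟩ := hij
          obtain ⟨f1, f2, f3⟩ := hb
          refine ⟨?_, ?_, ?_⟩
          · rintro rfl; exact lt_asymm e2 f3
          · rintro rfl; exact lt_asymm e3 f2
          · rintro rfl; apply hne; ext; omega
        have hbu : ∀ j, RedPair σ a j → j = b := by
          intro j hj; ext; rw [hj.1, hb.1]
        have hab' : a ≠ b := by intro h; have := hb.1; rw [h] at this; omega
        have nl : ∀ i ∈ l, i ≠ a := by rintro i hi rfl; exact ha hi
        simp only [Equiv.Perm.mul_apply]
        refine ⟨?_, ?_, ?_⟩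
        · intro j hx hj
          rcases List.mem_cons.1 hx with rfl | hx
          · rw [h3, Equiv.swap_apply_left, hbu j hj]
            intro i hi j hij
            have := key i j hij (nl i hi)
            exact ⟨(nl i hi).symm, this.2.1.symm⟩
          · have := key x j hj (nl x hx)
            rw [h1 j hx hj, Equiv.swap_apply_of_ne_of_ne this.2.1 this.2.2]
        · intro i hi hix
          rcases List.mem_cons.1 hi with rfl | hi
          · obtain rfl := hbu x hix
            rw [h3, Equiv.swap_apply_right]
            intro i hi j hij
            have := key i j hij (nl i hi)
            exact ⟨this.1.symm, this.2.2.symm⟩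
          · have := key i x hix (nl i hi)
            rw [h2 i hi hix, Equiv.swap_apply_of_ne_of_ne (nl i hi) this.1]
        · intro h
          rw [h3 fun i hi j => h i (List.mem_cons_of_mem _ hi) j]
          have := h a List.mem_cons_self b hb
          exact Equiv.swap_apply_of_ne_of_ne this.1 this.2
      · rw [dif_pos hab]
        simp only [hbe]
        rw [if_pos hb.2]
    · rw [List.filterMap_cons_none] at hr
      · subst hr
        refine ⟨?_, ?_, ?_⟩
        · intro j hx hj
          rcases List.mem_cons.1 hx with rfl | hx
          · exact absurd ⟨_, hj⟩ hp
          · exact h1 j hx hj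
        · intro i hi hix
          rcases List.mem_cons.1 hi with rfl | hi
          · exact absurd ⟨_, hix⟩ hp
          · exact h2 i hi hix
        · intro h
          exact h3 fun i hi j => h i (List.mem_cons_of_mem _ hi) j
      · split_ifs with h
        · dsimp only
          rw [if_neg]
          intro hh
          exact hp ⟨_, rfl, hh⟩
        · rfl

theorem reducingPerm_cases {n : ℕ} (σ : Equiv.Perm (Fin n)) (x : Fin n) :
    (RedPair σ x (reducingPerm σ x)) ∨ (RedPair σ (reducingPerm σ x) x) ∨
      (reducingPerm σ x = x ∧ ∀ j, ¬ RedPair σ x j ∧ ¬ RedPair σ j x) := by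
  obtain ⟨h1, h2, h3⟩ := redPair_list σ (List.finRange n) (List.nodup_finRange n) _ rfl x
  change ∀ j, _ → _ → reducingPerm σ x = j at h1
  change ∀ i ∈ _, _ → reducingPerm σ x = i at h2
  change _ → reducingPerm σ x = x at h3
  by_cases hA : ∃ j, RedPair σ x j
  · obtain ⟨j, hj⟩ := hA
    left; rw [h1 j (List.mem_finRange _) hj]; exact hj
  by_cases hB : ∃ j, RedPair σ j x
  · obtain ⟨j, hj⟩ := hB
    right; left; rw [h2 j (List.mem_finRange _) hj]; exact hj
  right; right
  push Not at hA hB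
  refine ⟨h3 ?_, fun j => ⟨hA j, hB j⟩⟩
  intro i _ j hij
  constructor
  · rintro rfl; exact hA _ hij
  · rintro rfl; exact hB _ hij

theorem perm_lt_of_inv {n : ℕ} (τ : Equiv.Perm (Fin n)) (p : Fin n → Prop)
    (h : ∀ j, p (τ j) → p j) : ∀ j, p j → p (τ j) := by
  intro j hj
  classical
  have hm : Set.MapsTo (τ⁻¹ : Equiv.Perm (Fin n)) (Finset.univ.filter p) (Finset.univ.filter p) := by
    intro x hx
    simp only [Finset.coe_filter, Finset.mem_univ, true_and, Set.mem_setOf_eq] at hx ⊢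
    apply h
    simpa using hx
  have hs := Finset.surjOn_of_injOn_of_card_le _ hm (τ⁻¹).injective.injOn le_rfl
  obtain ⟨y, hy, rfl⟩ := hs (show j ∈ _ by simpa using hj)
  simpa using hy

theorem cut_reduction {n : ℕ} (σ : Equiv.Perm (Fin n)) (c : Fin n) (hc : IsCutPoint σ c) :
    IsCutPoint (reduction σ) c := by
  intro j hj
  apply hc
  rcases reducingPerm_cases σ j with ⟨h1, h2, h3⟩ | ⟨h1, h2, h3⟩ | ⟨h, -⟩
  · have := hc j hj
    simp only [Fin.le_def, Fin.lt_def] at *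
    omega
  · simp only [Fin.le_def, Fin.lt_def] at *
    omega
  · rw [h]; exact hj

/-- If no `j ≠ m` crosses `m`, the section of `m` is trivial. -/
theorem trivial_of_cuts {n : ℕ} (τ : Equiv.Perm (Fin n)) (m : Fin n)
    (h1 : IsCutPoint τ m) (h2 : ∀ c : Fin n, (c : ℕ) + 1 = m → IsCutPoint τ c) :
    ∀ j : Fin n, InSameSection τ m j → j = m := by
  rintro j (⟨hle, h⟩ | ⟨hle, h⟩)
  · by_contra hne
    exact h m le_rfl (lt_of_le_of_ne hle (Ne.symm hne)) h1
  · by_contra hne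
    have hlt0 : j < m := lt_of_le_of_ne hle hne
    have hlt : (j : ℕ) < m := hlt0
    have hb : (m : ℕ) - 1 < n := by omega
    refine h ⟨(m : ℕ) - 1, hb⟩ ?_ ?_ (h2 _ ?_)
    · simp only [Fin.le_def]; omega
    · simp only [Fin.lt_def]; omega
    · simp only; omega

theorem cuts_of_trivial {n : ℕ} (σ : Equiv.Perm (Fin n)) (m : Fin n) (hm : σ m = m)
    (h : ∀ j : Fin n, InSameSection σ m j → j = m) :
    IsCutPoint σ m ∧ ∀ c : Fin n, (c : ℕ) + 1 = m → IsCutPoint σ c := by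
  have B : ∀ c : Fin n, (c : ℕ) + 1 = m → IsCutPoint σ c := by
    intro c hc
    by_contra hn
    have : c = m := by
      apply h
      right
      refine ⟨by simp only [Fin.le_def]; omega, ?_⟩
      intro d hd1 hd2
      have : d = c := by
        ext; simp only [Fin.le_def, Fin.lt_def] at *; omega
      rwa [this]
    rw [this] at hc; omega
  refine ⟨?_, B⟩
  intro j hj
  rcases eq_or_lt_of_le hj with rfl | hlt
  · exact hm.le
  · have hlt' : (j : ℕ) < m := hlt
    have hb : (m : ℕ) - 1 < n := by omega
    have := B ⟨(m : ℕ) - 1, hb⟩ (by simp only; omega) j (by simp only [Fin.le_def]; omega)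
    simp only [Fin.le_def] at *
    omega

/-- The reduction of a Strang canonical permutation is Strang canonical;
moreover, if every fixed point of `σ` lies in a trivial section, the same holds for the
reduction of `σ`. -/
theorem stmt_6 (n : ℕ) (σ : Equiv.Perm (Fin n)) (hsc : StrangCanonical σ) :
    StrangCanonical (reduction σ) ∧
    ((∀ m : Fin n, σ m = m → ∀ j : Fin n, InSameSection σ m j → j = m) →
      ∀ m : Fin n, reduction σ m = m →
        ∀ j : Fin n, InSameSection (reduction σ) m j → j = m) := by
  obtain ⟨hu, hl⟩ := hsc
  have hinj : ∀ i j : Fin n, i < j → (reducingPerm σ i : ℕ) ≠ reducingPerm σ j := by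
    intro i j hij h
    exact hij.ne ((reducingPerm σ).injective (Fin.ext h))
  have happ : ∀ i, reduction σ i = σ (reducingPerm σ i) := fun i => rfl
  refine ⟨⟨?_, ?_⟩, ?_⟩
  · have key : ∀ i, i < reduction σ i → reducingPerm σ i < σ (reducingPerm σ i) ∧
        (reducingPerm σ i : ℕ) ≤ i ∧ (i : ℕ) ≤ reducingPerm σ i + 1 := by
      intro i hi
      rw [happ] at hi
      rcases reducingPerm_cases σ i with ⟨h1, h2, h3⟩ | ⟨h1, h2, h3⟩ | ⟨h, -⟩
      · simp only [Fin.lt_def] at *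
        omega
      · exact ⟨h2, by omega, by omega⟩
      · rw [h] at hi ⊢
        exact ⟨hi, by omega, by omega⟩
    intro i j hij hi hj
    obtain ⟨a1, a2, a3⟩ := key i hi
    obtain ⟨b1, b2, b3⟩ := key j hj
    apply hu _ _ _ a1 b1
    have := hinj i j hij
    simp only [Fin.lt_def] at *
    omega
  · have key : ∀ i, reduction σ i < i → σ (reducingPerm σ i) < reducingPerm σ i ∧
        (i : ℕ) ≤ reducingPerm σ i ∧ (reducingPerm σ i : ℕ) ≤ i + 1 := by
      intro i hi
      rw [happ] at hi
      rcases reducingPerm_cases σ i with ⟨h1, h2, h3⟩ | ⟨h1, h2, h3⟩ | ⟨h, -⟩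
      · exact ⟨h3, by omega, by omega⟩
      · simp only [Fin.lt_def] at *
        omega
      · rw [h] at hi ⊢
        exact ⟨hi, by omega, by omega⟩
    intro i j hij hi hj
    obtain ⟨a1, a2, a3⟩ := key i hi
    obtain ⟨b1, b2, b3⟩ := key j hj
    apply hl _ _ _ a1 b1
    have := hinj i j hij
    simp only [Fin.lt_def] at *
    omega
  · intro hfix m hm
    rcases reducingPerm_cases σ m with ⟨h1, h2, h3⟩ | ⟨h1, h2, h3⟩ | ⟨h, -⟩
    · have hm' := hm
      rw [happ] at hm'
      generalize reducingPerm σ m = b at *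
      have C : ∀ j, j < m → σ j < m := by
        apply perm_lt_of_inv σ (fun x => x < m)
        intro j hj
        by_contra hn
        have hne : j ≠ m := by rintro rfl; exact lt_asymm hj h2
        have hne' : j ≠ b := by rintro rfl; rw [hm'] at hj; exact lt_irrefl _ hj
        have hbj : b < j := by
          have e1 : (j : ℕ) ≠ m := fun e => hne (Fin.ext e)
          have e2 : (j : ℕ) ≠ b := fun e => hne' (Fin.ext e)
          simp only [Fin.lt_def] at *
          omega
        have := hl b j hbj h3 (by simp only [Fin.lt_def] at *; omega)
        rw [hm'] at this
        exact lt_asymm this hj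
      have D : ∀ c : Fin n, (c : ℕ) + 1 = m → IsCutPoint (reduction σ) c := by
        intro c hc
        apply cut_reduction
        intro j hj
        have := C j (by simp only [Fin.lt_def, Fin.le_def] at *; omega)
        simp only [Fin.lt_def, Fin.le_def] at *
        omega
      refine trivial_of_cuts _ m ?_ D
      intro j hj
      rcases eq_or_lt_of_le hj with rfl | hlt
      · exact hm.le
      · have hlt' : (j : ℕ) < m := hlt
        have hb : (m : ℕ) - 1 < n := by omega
        have := D ⟨(m : ℕ) - 1, hb⟩ (by simp only; omega) j (by simp only [Fin.le_def]; omega)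
        simp only [Fin.le_def] at *
        omega
    · have hm' := hm
      rw [happ] at hm'
      generalize reducingPerm σ m = a at *
      have C : IsCutPoint (reduction σ) m := by
        apply cut_reduction
        intro j hj
        by_contra hn
        push Not at hn
        have hja : j ≠ m := by rintro rfl; exact lt_asymm hn h3
        have hjb : j ≠ a := by rintro rfl; rw [hm'] at hn; exact lt_irrefl _ hn
        have e1 : (j : ℕ) ≠ m := fun e => hja (Fin.ext e)
        have e2 : (j : ℕ) ≠ a := fun e => hjb (Fin.ext e)
        have := hu j a (by simp only [Fin.lt_def, Fin.le_def] at *; omega)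
          (lt_of_le_of_lt hj hn) h2
        rw [hm'] at this
        exact lt_asymm this hn
      refine trivial_of_cuts _ m C ?_
      intro c hc j hj
      have e := C j (by simp only [Fin.le_def] at *; omega)
      have e' : reduction σ j ≠ m := by
        intro h
        have : j = m := (reduction σ).injective (h.trans hm.symm)
        rw [this] at hj
        simp only [Fin.le_def] at hj
        omega
      have e2 : (reduction σ j : ℕ) ≠ m := fun h => e' (Fin.ext h)
      simp only [Fin.le_def] at *
      omega
    · have hs : σ m = m := by rw [happ, h] at hm; exact hm
      obtain ⟨c1, c2⟩ := cuts_of_trivial σ m hs (hfix m hs)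
      exact trivial_of_cuts _ m (cut_reduction σ m c1) fun c hc => cut_reduction σ c (c2 c hc)
end

section
/- Let σ be a fixed-point-free row-settled Strang canonical permutation of {1,…,n} (n ≥ 2) that has no cut point c with c < n (i.e., {1,…,n} is a single section), and let w be the bandwidth of σ. Set m = σ⁻¹(n). Then σ(i) > i for all i ≤ m, σ(i) < i for all i > m, σ(m+1) = 1, and moreover m ≤ w and n − m ≤ w. -/
/-- Structure of a fixed-point-free row-settled Strang canonical permutation
forming a single section. Here indices are 0-based: 1-based index `i` corresponds to `i - 1`,
so `m = σ⁻¹(n)` in 1-based terms is the `m` with `σ m = n - 1` (0-based), `1 ≤ m + 1 ≤ w` and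
`n - (m + 1) ≤ w` are the 1-based bounds, and `σ(m + 1) = 1` (1-based) reads
`σ ⟨m + 1, _⟩ = ⟨0, _⟩` (0-based). -/
theorem stmt_7 (n : ℕ) (hn : 2 ≤ n) (σ : Equiv.Perm (Fin n))
    (hfree : ∀ i : Fin n, σ i ≠ i)
    (hrs : RowSettled σ) (hsc : StrangCanonical σ)
    (hcut : ∀ c : Fin n, IsCutPoint σ c → (c : ℕ) = n - 1)
    (m : Fin n) (hm : σ m = ⟨n - 1, by omega⟩) :
    (∀ i : Fin n, i ≤ m → i < σ i) ∧
    (∀ i : Fin n, m < i → σ i < i) ∧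
    (∃ h : (m : ℕ) + 1 < n, σ ⟨(m : ℕ) + 1, h⟩ = ⟨0, by omega⟩) ∧
    (m : ℕ) + 1 ≤ bandwidth σ ∧ n - ((m : ℕ) + 1) ≤ bandwidth σ := by
  have hlast : ∀ i : Fin n, (i : ℕ) ≤ n - 1 := fun i => by have := i.isLt; omega
  have hmv : ((σ m : Fin n) : ℕ) = n - 1 := by rw [hm]
  have hne : ∀ i : Fin n, ((σ i : Fin n) : ℕ) ≠ i := fun i h => hfree i (Fin.ext h)
  have hmlt : (m : ℕ) < n - 1 := by
    have h1 := hne m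
    have h2 := hlast m
    omega
  have hmup : m < σ m := by rw [Fin.lt_def]; omega
  have hA : ∀ i : Fin n, i ≤ m → i < σ i := by
    intro i hi
    by_contra hlt
    rw [Fin.lt_def] at hlt
    have h1 := hne i
    have hdown : σ i < i := by rw [Fin.lt_def]; omega
    rcases lt_or_eq_of_le hi with h | h
    · refine hrs i m h ⟨hi, fun c _ hc hcc => ?_⟩ ⟨hdown, hmup⟩
      have h2 := hcut c hcc
      rw [Fin.lt_def] at hc
      omega
    · subst h
      exact lt_asymm hdown hmup
  have hB : ∀ i : Fin n, m < i → σ i < i := by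
    intro i hi
    by_contra hlt
    rw [Fin.lt_def] at hlt
    have h1 := hne i
    have hup : i < σ i := by rw [Fin.lt_def]; omega
    have h2 := hsc.1 m i hi hmup hup
    have h3 := hlast (σ i)
    rw [Fin.lt_def] at h2
    omega
  have hlt : (m : ℕ) + 1 < n := by omega
  have hC : σ ⟨(m : ℕ) + 1, hlt⟩ = ⟨0, by omega⟩ := by
    obtain ⟨k, hk⟩ := σ.surjective ⟨0, by omega⟩
    have hkv : ((σ k : Fin n) : ℕ) = 0 := by rw [hk]
    have hmk : m < k := by
      by_contra h
      have h1 := hA k (not_lt.mp h)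
      rw [Fin.lt_def] at h1
      omega
    have hdk := hB k hmk
    have hd1 := hB ⟨(m : ℕ) + 1, hlt⟩ (by rw [Fin.lt_def]; simp)
    by_cases hkm : (k : ℕ) = m + 1
    · have : k = ⟨(m : ℕ) + 1, hlt⟩ := Fin.ext hkm
      rw [← this, hk]
    · exfalso
      rw [Fin.lt_def] at hmk
      have h1 := hsc.2 ⟨(m : ℕ) + 1, hlt⟩ k (by rw [Fin.lt_def]; simp only; omega) hd1 hdk
      rw [Fin.lt_def] at h1
      omega
  have hbw : ∀ i : Fin n, ((σ i : ℤ) - (i : ℤ)).natAbs ≤ bandwidth σ := fun i =>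
    Finset.le_sup (f := fun i : Fin n => ((σ i : ℤ) - (i : ℤ)).natAbs) (Finset.mem_univ i)
  refine ⟨hA, hB, ⟨hlt, hC⟩, ?_, ?_⟩
  · have h1 := hbw ⟨(m : ℕ) + 1, hlt⟩
    rw [hC] at h1
    simp only at h1
    omega
  · have h1 := hbw m
    omega
end

section
/- Let n ≥ 2, let 1 ≤ s ≤ n−1, and let C_s be the cyclic shift by s on {1,…,n}. Let R be a row-settled Strang canonical permutation of {1,…,n} that is row-sign-equivalent to C_s. Then iterating the reduction map starting from R reaches the identity in at most n − 1 steps, i.e., in at most as many steps as iterating the reduction map starting from C_s requires. -/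
/-- the swapping condition at `i` -/
def redCond {n : ℕ} (σ : Equiv.Perm (Fin n)) (i j : Fin n) : Prop :=
  (j : ℕ) = i + 1 ∧ i < σ i ∧ σ j < j

/-- the partial product -/
def redProd {n : ℕ} (σ : Equiv.Perm (Fin n)) (l : List (Fin n)) : Equiv.Perm (Fin n) :=
  (l.filterMap fun i : Fin n =>
    if h : (i : ℕ) + 1 < n then
      let j : Fin n := ⟨(i : ℕ) + 1, h⟩
      if i < σ i ∧ σ j < j then some (Equiv.swap i j) else none
    else none).prod

theorem redProd_cons_pos {n : ℕ} (σ : Equiv.Perm (Fin n)) (a b : Fin n) (l : List (Fin n))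
    (h : redCond σ a b) : redProd σ (a :: l) = Equiv.swap a b * redProd σ l := by
  obtain ⟨h1, h2, h3⟩ := h
  have hb : (a : ℕ) + 1 < n := by have := b.2; omega
  obtain rfl : b = ⟨(a : ℕ) + 1, hb⟩ := Fin.ext h1
  unfold redProd
  rw [List.filterMap_cons_some (b := Equiv.swap a ⟨(a : ℕ) + 1, hb⟩)]
  · rw [List.prod_cons]
  · simp only [hb, dif_pos]
    rw [if_pos ⟨h2, h3⟩]

theorem redProd_cons_neg {n : ℕ} (σ : Equiv.Perm (Fin n)) (a : Fin n) (l : List (Fin n))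
    (h : ∀ b, ¬ redCond σ a b) : redProd σ (a :: l) = redProd σ l := by
  unfold redProd
  rw [List.filterMap_cons_none]
  by_cases hb : (a : ℕ) + 1 < n
  · simp only [hb, dif_pos]
    rw [if_neg]
    intro hh
    exact h ⟨(a : ℕ) + 1, hb⟩ ⟨rfl, hh.1, hh.2⟩
  · simp only [hb, dif_neg, not_false_eq_true]

theorem redCond_disj {n : ℕ} {σ : Equiv.Perm (Fin n)} {a b c d : Fin n}
    (h : redCond σ a b) (h' : redCond σ c d) (hne : a ≠ c) :
    b ≠ d ∧ a ≠ d ∧ b ≠ c := by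
  obtain ⟨h1, h2, h3⟩ := h
  obtain ⟨h1', h2', h3'⟩ := h'
  refine ⟨?_, ?_, ?_⟩
  · rintro rfl
    exact hne (Fin.ext (by omega))
  · rintro rfl
    exact absurd h2 (not_lt.mpr h3'.le)
  · rintro rfl
    exact absurd h2' (not_lt.mpr h3.le)

theorem redProd_spec {n : ℕ} (σ : Equiv.Perm (Fin n)) (l : List (Fin n)) (hl : l.Nodup) :
    (∀ a b, redCond σ a b → a ∈ l → redProd σ l a = b ∧ redProd σ l b = a) ∧
    (∀ x, (∀ b, redCond σ x b → x ∉ l) → (∀ a, redCond σ a x → a ∉ l) → redProd σ l x = x) := by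
  induction l with
  | nil => exact ⟨by simp, by simp [redProd]⟩
  | cons c l ih =>
    rw [List.nodup_cons] at hl
    obtain ⟨ih1, ih2⟩ := ih hl.2
    by_cases hc : ∃ d, redCond σ c d
    · obtain ⟨d, hd⟩ := hc
      rw [redProd_cons_pos σ c d l hd]
      have hcd : c ≠ d := fun h => by have := hd.1; rw [h] at this; omega
      constructor
      · intro a b hab ha
        by_cases hac : a = c
        · subst hac
          obtain rfl : b = d := Fin.ext (by rw [hab.1, hd.1])
          have e1 : redProd σ l a = a := ih2 a (fun _ _ => hl.1) (fun x hx hxl => by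
            by_cases hxa : x = a
            · subst hxa; exact hl.1 hxl
            · exact (redCond_disj hd hx (Ne.symm hxa)).2.1 rfl)
          have e2 : redProd σ l b = b := ih2 b
            (fun x hx hxl => by
              exact (redCond_disj hd hx hcd).2.2 rfl)
            (fun x hx hxl => by
              by_cases hxa : x = a
              · subst hxa; exact hl.1 hxl
              · exact (redCond_disj hd hx (Ne.symm hxa)).1 rfl)
          simp [e1, e2]
        · have hal : a ∈ l := by simpa [hac] using ha
          obtain ⟨e1, e2⟩ := ih1 a b hab hal
          obtain ⟨k1, k2, k3⟩ := redCond_disj hab hd hac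
          rw [Equiv.Perm.mul_apply, Equiv.Perm.mul_apply, e1, e2]
          exact ⟨Equiv.swap_apply_of_ne_of_ne k3 k1, Equiv.swap_apply_of_ne_of_ne hac k2⟩
      · intro x hx1 hx2
        have hxc : x ≠ c := by
          rintro rfl; exact hx1 d hd (by simp)
        have hxd : x ≠ d := by
          rintro rfl; exact hx2 c hd (by simp)
        rw [Equiv.Perm.mul_apply, ih2 x (fun b hb hm => hx1 b hb (by simp [hm]))
          (fun b hb hm => hx2 b hb (by simp [hm]))]
        exact Equiv.swap_apply_of_ne_of_ne hxc hxd
    · push Not at hc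
      rw [redProd_cons_neg σ c l hc]
      constructor
      · intro a b hab ha
        have hac : a ≠ c := by rintro rfl; exact hc b hab
        exact ih1 a b hab (by simpa [hac] using ha)
      · intro x hx1 hx2
        exact ih2 x (fun b hb hm => hx1 b hb (by simp [hm]))
          (fun b hb hm => hx2 b hb (by simp [hm]))

theorem reducingPerm_spec {n : ℕ} (σ : Equiv.Perm (Fin n)) :
    (∀ a b, redCond σ a b → reducingPerm σ a = b ∧ reducingPerm σ b = a) ∧
    (∀ x, (∀ b, ¬ redCond σ x b) → (∀ a, ¬ redCond σ a x) → reducingPerm σ x = x) := by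
  have := redProd_spec σ (List.finRange n) (List.nodup_finRange n)
  refine ⟨fun a b h => this.1 a b h (List.mem_finRange a), fun x h1 h2 => this.2 x ?_ ?_⟩
  · intro b hb; exact absurd hb (h1 b)
  · intro b hb; exact absurd hb (h2 b)

theorem pos_move {n : ℕ} (σ : Equiv.Perm (Fin n)) (v b : Fin n) (h : redCond σ (σ.symm v) b) :
    (reduction σ).symm v = b := by
  rw [Equiv.symm_apply_eq]
  unfold reduction
  rw [Equiv.Perm.mul_apply, ((reducingPerm_spec σ).1 _ b h).2, Equiv.apply_symm_apply]

theorem pos_cases {n : ℕ} (σ : Equiv.Perm (Fin n)) (v : Fin n) :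
    (reduction σ).symm v = σ.symm v ∨
    (((reduction σ).symm v : ℕ) = σ.symm v + 1 ∧ σ.symm v < v) ∨
    (((reduction σ).symm v : ℕ) + 1 = σ.symm v ∧ v < σ.symm v) := by
  by_cases h1 : ∃ b, redCond σ (σ.symm v) b
  · obtain ⟨b, hb⟩ := h1
    right; left
    rw [pos_move σ v b hb]
    refine ⟨hb.1, ?_⟩
    have := hb.2.1
    rwa [Equiv.apply_symm_apply] at this
  · by_cases h2 : ∃ a, redCond σ a (σ.symm v)
    · obtain ⟨a, ha⟩ := h2
      right; right
      have : (reduction σ).symm v = a := by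
        rw [Equiv.symm_apply_eq]
        unfold reduction
        rw [Equiv.Perm.mul_apply, ((reducingPerm_spec σ).1 a _ ha).1, Equiv.apply_symm_apply]
      rw [this]
      refine ⟨ha.1.symm, ?_⟩
      have := ha.2.2
      rwa [Equiv.apply_symm_apply] at this
    · left
      push Not at h1 h2
      rw [Equiv.symm_apply_eq]
      unfold reduction
      rw [Equiv.Perm.mul_apply, (reducingPerm_spec σ).2 _ h1 h2, Equiv.apply_symm_apply]

/-- The invariant; `U` is the class of right-moving values. -/
structure RedInv {n : ℕ} (U : Fin n → Prop) (σ : Equiv.Perm (Fin n)) : Prop where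
  up : ∀ v, U v → σ.symm v ≤ v
  lo : ∀ v, ¬ U v → v ≤ σ.symm v
  mu : ∀ v w, U v → U w → v < w → σ.symm v < σ.symm w
  ml : ∀ v w, ¬ U v → ¬ U w → v < w → σ.symm v < σ.symm w

theorem RedInv.step {n : ℕ} {U : Fin n → Prop} {σ : Equiv.Perm (Fin n)} (h : RedInv U σ) :
    RedInv U (reduction σ) := by
  have inj : ∀ v w : Fin n, v < w →
      ((reduction σ).symm v : ℕ) ≠ ((reduction σ).symm w : ℕ) := by
    intro v w hvw he
    exact hvw.ne ((reduction σ).symm.injective (Fin.ext he))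
  constructor
  · intro v hv
    have := h.up v hv
    have c := pos_cases σ v
    simp only [Fin.ext_iff, Fin.lt_def, Fin.le_def] at *
    omega
  · intro v hv
    have := h.lo v hv
    have c := pos_cases σ v
    simp only [Fin.ext_iff, Fin.lt_def, Fin.le_def] at *
    omega
  · intro v w hv hw hvw
    have i := inj v w hvw
    have k := h.mu v w hv hw hvw
    have k1 := h.up v hv
    have k2 := h.up w hw
    have c := pos_cases σ v
    have c' := pos_cases σ w
    simp only [Fin.ext_iff, Fin.lt_def, Fin.le_def] at c c' k k1 k2 ⊢
    omega
  · intro v w hv hw hvw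
    have i := inj v w hvw
    have k := h.ml v w hv hw hvw
    have k1 := h.lo v hv
    have k2 := h.lo w hw
    have c := pos_cases σ v
    have c' := pos_cases σ w
    simp only [Fin.ext_iff, Fin.lt_def, Fin.le_def] at c c' k k1 k2 ⊢
    omega

/-- A right-mover is never followed by a settled left-mover. -/
theorem RedInv.no_block {n : ℕ} {U : Fin n → Prop} {σ : Equiv.Perm (Fin n)} (h : RedInv U σ)
    (v u : Fin n) (hv : σ.symm v < v) (hu : ¬ U u) (hpu : σ.symm u = u)
    (hvu : (u : ℕ) = σ.symm v + 1) : False := by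
  set p := σ.symm v with hp
  have hσp : σ p = v := by rw [hp, Equiv.apply_symm_apply]
  by_cases hx : ∃ x : Fin n, x ≤ p ∧ p < σ.symm x
  · obtain ⟨x, hx1, hx2⟩ := hx
    have hxU : ¬ U x := fun hU => by
      have := h.up x hU
      exact absurd (lt_of_lt_of_le hx2 this) (not_lt.mpr hx1)
    have hxu : x < u := by
      rw [Fin.lt_def]; rw [Fin.le_def] at hx1; omega
    have := h.ml x u hxU hu hxu
    rw [hpu] at this
    rw [Fin.lt_def] at *
    omega
  · push Not at hx
    -- σ.symm maps Iic p into itself, hence onto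
    have hm : Set.MapsTo σ.symm (Set.Iic p) (Set.Iic p) := fun x hx' => hx x hx'
    have hs : Set.SurjOn σ.symm (Finset.Iic p : Finset (Fin n)) (Finset.Iic p : Finset (Fin n)) :=
      Finset.surjOn_of_injOn_of_card_le _ (by simpa using hm) σ.symm.injective.injOn le_rfl
    obtain ⟨y, hy, hyp⟩ := hs (by simp : p ∈ ((Finset.Iic p : Finset (Fin n)) : Set (Fin n)))
    have hy : y ≤ p := by simpa using hy
    rw [hp] at hyp
    have : y = v := σ.symm.injective hyp
    subst this
    exact absurd hv (not_lt.mpr hy)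

theorem cyclicShift_val (n s : ℕ) (i : Fin n) : ((cyclicShift n s i : Fin n) : ℕ) = (i + s) % n := by
  unfold cyclicShift
  cases n with
  | zero => exact i.elim0
  | succ k =>
    induction s with
    | zero => simp [Nat.mod_eq_of_lt i.2]
    | succ s ih =>
      rw [pow_succ', Equiv.Perm.mul_apply, finRotate_succ_apply, Fin.val_add, ih]
      simp [Nat.add_mod, ← add_assoc]

theorem stmt_9 (n : ℕ) (hn : 2 ≤ n) (s : ℕ) (hs1 : 1 ≤ s) (hs2 : s ≤ n - 1)
    (R : Equiv.Perm (Fin n)) (hrs : RowSettled R) (hsc : StrangCanonical R)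
    (hsign : ∀ i : Fin n, ((R i : ℤ) - (i : ℤ)).sign = ((cyclicShift n s i : ℤ) - (i : ℤ)).sign) :
    ∃ q ≤ n - 1, reduction^[q] R = 1 := by
  obtain ⟨m, hm⟩ : ∃ m, m + s = n := ⟨n - s, by omega⟩
  have hpos : ∀ i : Fin n, (i : ℕ) < m → i < R i := by
    intro i hi
    have h := hsign i
    rw [cyclicShift_val, Nat.mod_eq_of_lt (by omega)] at h
    rw [Int.sign_eq_one_of_pos (a := ((i + s : ℕ) : ℤ) - (i : ℤ)) (by push_cast; omega), Int.sign_eq_one_iff_pos] at h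
    rw [Fin.lt_def]; omega
  have hneg : ∀ i : Fin n, m ≤ (i : ℕ) → R i < i := by
    intro i hi
    have h := hsign i
    have h2 := i.2
    rw [cyclicShift_val, Nat.mod_eq_sub_mod (by omega), Nat.mod_eq_of_lt (by omega)] at h
    rw [Int.sign_eq_neg_one_of_neg (a := ((i + s - n : ℕ) : ℤ) - (i : ℤ)) (by omega), Int.sign_eq_neg_one_iff_neg] at h
    rw [Fin.lt_def]; omega
  let U : Fin n → Prop := fun v => (R.symm v : ℕ) < m
  have hRm : ∀ i j : Fin n, i < j → (j : ℕ) < m → R i < R j := fun i j hij hj =>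
    hsc.1 i j hij (hpos i (by rw [Fin.lt_def] at hij; omega)) (hpos j hj)
  have hRl : ∀ i j : Fin n, i < j → m ≤ (i : ℕ) → R i < R j := fun i j hij hj =>
    hsc.2 i j hij (hneg i hj) (hneg j (by rw [Fin.lt_def] at hij; omega))
  have inv0 : RedInv U R := by
    constructor
    · intro v hv
      have := hpos _ hv
      rw [Equiv.apply_symm_apply] at this
      exact this.le
    · intro v hv
      have := hneg _ (not_lt.mp hv)
      rw [Equiv.apply_symm_apply] at this
      exact this.le
    · intro v w hv hw hvw
      by_contra hc
      rcases (not_lt.mp hc).eq_or_lt with he | he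
      · exact hvw.ne (R.symm.injective he.symm)
      · have := hRm _ _ he hv
        rw [Equiv.apply_symm_apply, Equiv.apply_symm_apply] at this
        exact absurd hvw (not_lt.mpr this.le)
    · intro v w hv hw hvw
      by_contra hc
      rcases (not_lt.mp hc).eq_or_lt with he | he
      · exact hvw.ne (R.symm.injective he.symm)
      · have := hRl _ _ he (not_lt.mp hw)
        rw [Equiv.apply_symm_apply, Equiv.apply_symm_apply] at this
        exact absurd hvw (not_lt.mpr this.le)
  have inv : ∀ t, RedInv U (reduction^[t] R) := by
    intro t
    induction t with
    | zero => exact inv0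
    | succ t ih => rw [Function.iterate_succ_apply']; exact ih.step
  have bound : ∀ t, ∀ v, U v → 
      (v : ℕ) ≤ (reduction^[t] R).symm v ∨
      (R.symm v : ℕ) + (t + R.symm v + 1 - m) ≤ (reduction^[t] R).symm v := by
    intro t
    induction t with
    | zero =>
      intro v hv
      right
      have : (R.symm v : ℕ) < m := hv
      simp only [Function.iterate_zero, id]
      omega
    | succ t ih =>
      intro v hv
      have I := inv t
      have I' := inv (t+1)
      have b := ih v hv
      have hvm : (R.symm v : ℕ) < m := hv
      rw [Function.iterate_succ_apply'] at I' ⊢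
      set σ := reduction^[t] R with hσ
      have c := pos_cases σ v
      have k := I.up v hv
      simp only [Fin.ext_iff, Fin.lt_def, Fin.le_def] at c k
      by_contra hcon
      push Not at hcon
      have hpv : (σ.symm v : ℕ) < v := by omega
      have hp : (σ.symm v : ℕ) = (R.symm v : ℕ) + (t + R.symm v + 1 - m) ∧ m ≤ t + R.symm v + 2 := by
        omega
      have hp1 : (σ.symm v : ℕ) + 1 < n := by have := v.2; omega
      set q : Fin n := ⟨(σ.symm v : ℕ) + 1, hp1⟩ with hq
      have hqv : (q : ℕ) = (σ.symm v : ℕ) + 1 := rfl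
      obtain ⟨u, hu⟩ : ∃ u, u = σ q := ⟨_, rfl⟩
      have hsu : σ.symm u = q := by rw [hu, Equiv.symm_apply_apply]
      have hmove : σ q < q := by
        rw [← hu]
        by_cases hU : U u
        · exfalso
          have hvu : v < u := by
            by_contra hc
            rcases (not_lt.mp hc).eq_or_lt with he | he
            · rw [he] at hsu; rw [hsu] at hqv; omega
            · have := I.mu u v hU hv he
              rw [hsu, Fin.lt_def] at this; omega
          have hi := inv0.mu v u hv hU hvu
          have hum : (R.symm u : ℕ) < m := hU
          have bu := ih u hU
          rw [hsu] at bu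
          rw [Fin.lt_def] at hi hvu
          omega
        · have hl := I.lo u hU
          rw [hsu] at hl
          refine lt_of_le_of_ne hl ?_
          intro he
          exact I.no_block v u hpv hU (by rw [hsu, he]) (by rw [he])
      have := pos_move σ v q ⟨hqv, by rw [Equiv.apply_symm_apply]; exact hpv, hmove⟩
      rw [this] at hcon
      omega
  -- the target of the value starting at `i < m` is at most `i + s`
  have home : ∀ d, ∀ v, U v → (R.symm v : ℕ) + d + 1 = m → (v : ℕ) + d + 1 ≤ n := by
    intro d
    induction d with
    | zero => intro v _ _; have := v.2; omega
    | succ d ih =>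
      intro v hv hd
      let j : Fin n := ⟨(R.symm v : ℕ) + 1, by omega⟩
      have hj : (j : ℕ) = (R.symm v : ℕ) + 1 := rfl
      have h1 := ih (R j) (by show ((R.symm (R j)) : ℕ) < m; rw [Equiv.symm_apply_apply]; omega)
        (by rw [Equiv.symm_apply_apply]; omega)
      have h2 := hRm (R.symm v) j (by rw [Fin.lt_def]; omega) (by omega)
      rw [Equiv.apply_symm_apply, Fin.lt_def] at h2
      omega
  refine ⟨n - 1, le_rfl, ?_⟩
  have I := inv (n - 1)
  have B := bound (n - 1)
  set σ := reduction^[n-1] R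
  have hle : ∀ v, v ≤ σ.symm v := by
    intro v
    by_cases hv : U v
    · have b := B v hv
      have hvm : (R.symm v : ℕ) < m := hv
      have := home (m - 1 - R.symm v) v hv (by omega)
      rw [Fin.le_def]
      omega
    · exact I.lo v hv
  have hsum : ∑ v : Fin n, (v : ℕ) = ∑ v : Fin n, (σ.symm v : ℕ) :=
    (Equiv.sum_comp σ.symm (fun v : Fin n => (v : ℕ))).symm
  have heq := (Finset.sum_eq_sum_iff_of_le (fun (v : Fin n) _ => (Fin.le_def.mp (hle v) : (v : ℕ) ≤ σ.symm v))).mp hsum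
  ext v
  have := heq (σ v) (Finset.mem_univ _)
  rw [Equiv.symm_apply_apply] at this
  simpa using this
end
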